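/- arXiv:2507.00252 — 13 statements merged into one kernel-verified Lean document; each statement's English description precedes it below -/
import Mathlib

section
/- There exists an absolute constant C > 0 such that for every integer n ≥ 2, every simple graph G on n vertices admits a biclique cover of size at most C · n² / log₂ n. -/
/-! Split the `n` vertices into blocks `P j` of at most `k ≈ (log₂ n) / 2` vertices each. For every
block `P j` and every `S ⊆ P j`, take the biclique between `S` and the set of all vertices whose
neighbourhood inside `P j` is exactly `S`. These bicliques cover all edges. For a fixed block the
second sides partition the vertex set, so they contribute `n`, while the first sides contribute at
most `k * 2 ^ k ≤ 4 ^ k ≤ 4 n`. With at most `n / k + 1 ≤ 2 n / k` blocks the total is at most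
`10 n² / k ≤ 20 n² / log₂ n`. -/

/-- A biclique cover of a simple graph `G`: a finite family of pairs of disjoint
vertex sets `(A i, B i)` such that every pair in `A i × B i` is an edge of `G`,
and every edge of `G` is covered by at least one biclique. -/
def IsBicliqueCover {V : Type*} (G : SimpleGraph V) {m : ℕ}
    (A B : Fin m → Finset V) : Prop :=
  (∀ i, Disjoint (A i) (B i)) ∧
  (∀ i, ∀ a ∈ A i, ∀ b ∈ B i, G.Adj a b) ∧
  (∀ u v, G.Adj u v → ∃ i, (u ∈ A i ∧ v ∈ B i) ∨ (v ∈ A i ∧ u ∈ B i))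

/-- A biclique partition: a biclique cover in which every edge is covered by
exactly one biclique. -/
def IsBicliquePartition {V : Type*} (G : SimpleGraph V) {m : ℕ}
    (A B : Fin m → Finset V) : Prop :=
  (∀ i, Disjoint (A i) (B i)) ∧
  (∀ i, ∀ a ∈ A i, ∀ b ∈ B i, G.Adj a b) ∧
  (∀ u v, G.Adj u v → ∃! i, (u ∈ A i ∧ v ∈ B i) ∨ (v ∈ A i ∧ u ∈ B i))

/-- The size of a biclique cover: the sum of `|A i| + |B i|`. -/
def coverSize {V : Type*} {m : ℕ} (A B : Fin m → Finset V) : ℕ :=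
  ∑ i, ((A i).card + (B i).card)

/-- A cover indexed by an arbitrary finite type can be reindexed by `Fin m`. -/
lemma exists_cover_of_fintype {V ι : Type*} [Fintype ι] (G : SimpleGraph V)
    (A B : ι → Finset V)
    (hadj : ∀ i, ∀ a ∈ A i, ∀ b ∈ B i, G.Adj a b)
    (hcov : ∀ u v, G.Adj u v → ∃ i, u ∈ A i ∧ v ∈ B i) :
    ∃ (m : ℕ) (A' B' : Fin m → Finset V), IsBicliqueCover G A' B' ∧
      coverSize A' B' = ∑ i, ((A i).card + (B i).card) := by
  let e := Fintype.equivFin ι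
  refine ⟨Fintype.card ι, A ∘ e.symm, B ∘ e.symm, ⟨?_, ?_, ?_⟩, ?_⟩
  · intro i
    rw [Finset.disjoint_left]
    intro a ha hb
    exact G.irrefl (hadj _ a ha a hb)
  · intro i
    exact hadj _
  · intro u v huv
    obtain ⟨i, hi⟩ := hcov u v huv
    exact ⟨e i, Or.inl (by simpa using hi)⟩
  · exact Equiv.sum_comp e.symm (fun i => (A i).card + (B i).card)

/-- The cover built from a colouring `c` of the vertices whose colour classes, the blocks, have at
most `k` elements. -/
lemma exists_cover_of_blocks {V : Type*} [Fintype V] (G : SimpleGraph V) (q k : ℕ)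
    (c : V → Fin q) (hc : ∀ j, ∃ P : Finset V, (∀ v, v ∈ P ↔ c v = j) ∧ P.card ≤ k) :
    ∃ (m : ℕ) (A B : Fin m → Finset V), IsBicliqueCover G A B ∧
      coverSize A B ≤ q * (2 ^ k * k + Fintype.card V) := by
  classical
  choose P hP hPk using hc
  let N : Fin q → V → Finset V := fun j v => (P j).filter (fun u => G.Adj u v)
  -- Sets `S` not contained in the block get an empty first side, so they cost nothing there.
  obtain ⟨m, A, B, hAB, hsize⟩ := exists_cover_of_fintype (ι := Fin q × Finset V) G
    (fun i => if i.2 ⊆ P i.1 then i.2 else ∅)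
    (fun i => Finset.univ.filter (fun v => N i.1 v = i.2))
    (by
      rintro ⟨j, S⟩ a ha b hb
      simp only [Finset.mem_filter, Finset.mem_univ, true_and] at hb
      dsimp only at ha
      split_ifs at ha
      · rw [← hb] at ha
        exact (Finset.mem_filter.1 ha).2
      · simp at ha)
    (by
      intro u v huv
      refine ⟨(c u, N (c u) v), ?_, by simp⟩
      have hsub : N (c u) v ⊆ P (c u) := Finset.filter_subset _ _
      simp only [hsub, if_true]
      exact Finset.mem_filter.2 ⟨(hP _ _).2 rfl, huv⟩)
  refine ⟨m, A, B, hAB, ?_⟩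
  rw [hsize, Fintype.sum_prod_type]
  calc _ ≤ ∑ _j : Fin q, (2 ^ k * k + Fintype.card V) := by
        refine Finset.sum_le_sum fun j _ => ?_
        rw [Finset.sum_add_distrib]
        refine Nat.add_le_add ?_ ?_
        · calc ∑ S : Finset V, (if S ⊆ P j then S else ∅).card
              = ∑ S : Finset V, if S ∈ (P j).powerset then S.card else 0 := by
                refine Finset.sum_congr rfl fun S _ => ?_
                by_cases h : S ⊆ P j <;> simp [h]
            _ = ∑ S ∈ (P j).powerset, S.card := by
                rw [← Finset.sum_filter]
                congr 1
                ext S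
                simp
            _ ≤ (P j).powerset.card * k := by
                rw [← smul_eq_mul]
                refine Finset.sum_le_card_nsmul _ _ _ fun S hS => ?_
                exact (Finset.card_le_card (Finset.mem_powerset.1 hS)).trans (hPk j)
            _ ≤ 2 ^ k * k := by
                rw [Finset.card_powerset]
                exact Nat.mul_le_mul_right _ (Nat.pow_le_pow_right (by norm_num) (hPk j))
        · exact (Finset.card_eq_sum_card_fiberwise (f := N j) (s := Finset.univ)
            (t := Finset.univ) (fun _ _ => by simp)).ge
    _ = q * (2 ^ k * k + Fintype.card V) := by simp

/-- Cutting `V` into consecutive runs of length `k` gives at most `n / k + 1` blocks. -/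
lemma exists_blocks {V : Type*} [Fintype V] (k : ℕ) (hk : 0 < k) :
    ∃ c : V → Fin (Fintype.card V / k + 1),
      ∀ j, ∃ P : Finset V, (∀ v, v ∈ P ↔ c v = j) ∧ P.card ≤ k := by
  classical
  let e := Fintype.equivFin V
  refine ⟨fun v => ⟨(e v : ℕ) / k,
    Nat.lt_succ_of_le (Nat.div_le_div_right (e v).isLt.le)⟩, fun j => ?_⟩
  refine ⟨Finset.univ.filter (fun v => (e v : ℕ) / k = j), fun v => by simp [Fin.ext_iff], ?_⟩
  calc _ ≤ (Finset.range k).card := by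
        refine Finset.card_le_card_of_injOn (fun v => (e v : ℕ) % k) ?_ ?_
        · intro v _
          simpa using Nat.mod_lt _ hk
        · intro u hu v hv huv
          simp only [Finset.coe_filter, Finset.mem_univ, true_and, Set.mem_ofPred_eq] at hu hv
          apply e.injective
          apply Fin.ext
          rw [← Nat.div_add_mod (e u : ℕ) k, ← Nat.div_add_mod (e v : ℕ) k, hu, hv]
          exact congrArg _ huv
    _ = k := Finset.card_range k

/-- Every simple graph on `n ≥ 2` vertices has a biclique cover of size
`O(n² / log₂ n)`. -/
theorem stmt_0 :
    ∃ C : ℝ, 0 < C ∧ ∀ n : ℕ, 2 ≤ n → ∀ (V : Type) [Fintype V],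
      Fintype.card V = n → ∀ G : SimpleGraph V,
      ∃ (m : ℕ) (A B : Fin m → Finset V),
        IsBicliqueCover G A B ∧
        (coverSize A B : ℝ) ≤ C * (n : ℝ) ^ 2 / Real.logb 2 n := by
  refine ⟨20, by norm_num, ?_⟩
  intro n hn V _ hV G
  obtain ⟨k, hk⟩ : ∃ k, k = Nat.log 2 n / 2 + 1 := ⟨_, rfl⟩
  have hk0 : 0 < k := by omega
  have hkn : k ≤ n := by
    have := Nat.log_lt_self 2 (show n ≠ 0 by omega)
    omega
  have hpow : 2 ^ k * k ≤ 4 * n := by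
    calc 2 ^ k * k ≤ 2 ^ k * 2 ^ k := Nat.mul_le_mul_left _ Nat.lt_two_pow_self.le
      _ = 4 * 2 ^ (2 * (Nat.log 2 n / 2)) := by rw [hk]; ring
      _ ≤ 4 * 2 ^ Nat.log 2 n :=
          Nat.mul_le_mul_left _ (Nat.pow_le_pow_right (by norm_num) (by omega))
      _ ≤ 4 * n := Nat.mul_le_mul_left _ (Nat.pow_log_le_self 2 (by omega))
  obtain ⟨c, hc⟩ := exists_blocks (V := V) k hk0
  obtain ⟨m, A, B, hAB, hsize⟩ := exists_cover_of_blocks G _ k c hc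
  refine ⟨m, A, B, hAB, ?_⟩
  rw [hV] at hsize
  have hn1 : (1 : ℝ) < n := by exact_mod_cast hn
  have hlog : 0 < Real.logb 2 n := Real.logb_pos (by norm_num) hn1
  have hlogk : Real.logb 2 n ≤ 2 * k := by
    have h1 : (n : ℝ) ≤ (2 : ℝ) ^ (2 * k) := by
      have h := Nat.lt_pow_succ_log_self (b := 2) (by norm_num) n
      have h' : 2 ^ (Nat.log 2 n).succ ≤ 2 ^ (2 * k) :=
        Nat.pow_le_pow_right (by norm_num) (by omega)
      exact_mod_cast h.le.trans h'
    rw [Real.logb_le_iff_le_rpow (by norm_num) (by linarith)]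
    exact_mod_cast h1
  have hblocks : (n / k + 1) * k ≤ 2 * n := by
    have := Nat.div_mul_le_self n k
    nlinarith
  have htotal : coverSize A B * k ≤ 10 * n ^ 2 := by
    calc coverSize A B * k ≤ (n / k + 1) * (2 ^ k * k + n) * k := Nat.mul_le_mul_right _ hsize
      _ = ((n / k + 1) * k) * (2 ^ k * k + n) := by ring
      _ ≤ (2 * n) * (4 * n + n) := Nat.mul_le_mul hblocks (by omega)
      _ = 10 * n ^ 2 := by ring
  have htotal' : (coverSize A B : ℝ) * k ≤ 10 * (n : ℝ) ^ 2 := by exact_mod_cast htotal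
  rw [le_div_iff₀ hlog]
  calc (coverSize A B : ℝ) * Real.logb 2 n ≤ coverSize A B * (2 * k) := by gcongr
    _ ≤ 20 * (n : ℝ) ^ 2 := by linarith
end

section
/- Let t ≥ 1 be an integer and let G be a simple graph containing no K_{t,t} subgraph, i.e., there do not exist disjoint vertex sets S and T with |S| = |T| = t such that every pair (s, u) ∈ S × T is an edge of G. If G admits a biclique cover of size s, then G has at most t · s edges. -/
theorem card_mul_card_le_of_biclique {V : Type} {t : ℕ} {G : SimpleGraph V}
    (hKtt : ¬ ∃ S T : Finset V, Disjoint S T ∧ S.card = t ∧ T.card = t ∧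
      ∀ s ∈ S, ∀ u ∈ T, G.Adj s u)
    {A B : Finset V} (hdisj : Disjoint A B) (hadj : ∀ a ∈ A, ∀ b ∈ B, G.Adj a b) :
    A.card * B.card ≤ t * (A.card + B.card) := by
  have hsmall : A.card < t ∨ B.card < t := by
    by_contra! h
    obtain ⟨S, hSA, hS⟩ := Finset.exists_subset_card_eq h.1
    obtain ⟨T, hTB, hT⟩ := Finset.exists_subset_card_eq h.2
    exact hKtt ⟨S, T, Finset.disjoint_of_subset_left hSA (Finset.disjoint_of_subset_right hTB hdisj),
      hS, hT, fun s hs u hu => hadj s (hSA hs) u (hTB hu)⟩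
  rcases hsmall with h | h
  · nlinarith [Nat.mul_le_mul_right B.card h.le]
  · nlinarith [Nat.mul_le_mul_left A.card h.le]

/-- If `G` has no `K_{t,t}` subgraph and admits a biclique cover of size `s`,
then `G` has at most `t * s` edges. -/
theorem stmt_1 {V : Type} [Fintype V] [DecidableEq V] (t : ℕ) (ht : 1 ≤ t)
    (G : SimpleGraph V) [DecidableRel G.Adj]
    (hKtt : ¬ ∃ S T : Finset V, Disjoint S T ∧ S.card = t ∧ T.card = t ∧
      ∀ s ∈ S, ∀ u ∈ T, G.Adj s u)
    {m : ℕ} (A B : Fin m → Finset V) (hcov : IsBicliqueCover G A B) :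
    G.edgeFinset.card ≤ t * coverSize A B := by
  obtain ⟨hdisj, hadj, hcover⟩ := hcov
  have hsub : G.edgeFinset ⊆
      Finset.univ.biUnion fun i => (A i ×ˢ B i).image fun p => s(p.1, p.2) := by
    intro e
    induction e using Sym2.ind with
    | _ u v =>
      intro he
      obtain ⟨i, h | h⟩ := hcover u v (by simpa using he)
      · exact Finset.mem_biUnion.2 ⟨i, Finset.mem_univ i,
          Finset.mem_image.2 ⟨(u, v), Finset.mem_product.2 h, rfl⟩⟩
      · exact Finset.mem_biUnion.2 ⟨i, Finset.mem_univ i,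
          Finset.mem_image.2 ⟨(v, u), Finset.mem_product.2 h, Sym2.eq_swap⟩⟩
  calc G.edgeFinset.card
      ≤ ∑ i, ((A i ×ˢ B i).image fun p => s(p.1, p.2)).card :=
        (Finset.card_le_card hsub).trans Finset.card_biUnion_le
    _ ≤ ∑ i, t * ((A i).card + (B i).card) := by
        refine Finset.sum_le_sum fun i _ => Finset.card_image_le.trans ?_
        rw [Finset.card_product]
        exact card_mul_card_le_of_biclique hKtt (hdisj i) (hadj i)
    _ = t * coverSize A B := by rw [coverSize, Finset.mul_sum]
end

section
/- If a simple graph G admits a biclique cover of size s, then G has a spanning subgraph G' with at most s edges that is a 3-hop spanner of G: for every edge uv of G there is a walk of length at most 3 from u to v in G'. -/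
/-- The double star of a biclique, as a set of edges between `A` and `B`: it has at most
`|A| + |B|` elements and joins any `u ∈ A` to any `v ∈ B` by a walk `u, b, a, v`. -/
theorem exists_double_star {V : Type*} (A B : Finset V) :
    ∃ E : Finset (Sym2 V), E.card ≤ A.card + B.card ∧
      (∀ e ∈ E, ∃ x ∈ A, ∃ y ∈ B, e = s(x, y)) ∧
      ∀ u ∈ A, ∀ v ∈ B, ∃ a b, s(u, b) ∈ E ∧ s(b, a) ∈ E ∧ s(a, v) ∈ E := by
  classical
  by_cases h : A.Nonempty ∧ B.Nonempty
  · obtain ⟨⟨a, ha⟩, ⟨b, hb⟩⟩ := h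
    refine ⟨A.image (fun x => s(x, b)) ∪ B.image (fun y => s(a, y)), ?_, ?_, ?_⟩
    · exact (Finset.card_union_le _ _).trans
        (Nat.add_le_add Finset.card_image_le Finset.card_image_le)
    · intro e he
      rcases Finset.mem_union.1 he with he | he
      · obtain ⟨x, hx, rfl⟩ := Finset.mem_image.1 he
        exact ⟨x, hx, b, hb, rfl⟩
      · obtain ⟨y, hy, rfl⟩ := Finset.mem_image.1 he
        exact ⟨a, ha, y, hy, rfl⟩
    · intro u hu v hv
      refine ⟨a, b, Finset.mem_union_left _ (Finset.mem_image.2 ⟨u, hu, rfl⟩),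
        Finset.mem_union_left _ (Finset.mem_image.2 ⟨a, ha, Sym2.eq_swap⟩),
        Finset.mem_union_right _ (Finset.mem_image.2 ⟨v, hv, rfl⟩)⟩
  · refine ⟨∅, by simp, by simp, fun u hu v hv => (h ⟨⟨u, hu⟩, ⟨v, hv⟩⟩).elim⟩

/-- If `G` admits a biclique cover of size `s`, then `G` has a spanning subgraph
with at most `s` edges that is a 3-hop spanner of `G`. -/
theorem stmt_2 {V : Type} (G : SimpleGraph V) {m : ℕ} (A B : Fin m → Finset V)
    (hcov : IsBicliqueCover G A B) :
    ∃ G' : SimpleGraph V, G' ≤ G ∧ G'.edgeSet.Finite ∧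
      G'.edgeSet.ncard ≤ coverSize A B ∧
      ∀ u v, G.Adj u v → ∃ p : G'.Walk u v, p.length ≤ 3 := by
  classical
  obtain ⟨-, hadj, hcover⟩ := hcov
  choose E hcard hE hpath using fun i => exists_double_star (A i) (B i)
  let F : Finset (Sym2 V) := Finset.univ.biUnion E
  have hFG : ∀ e ∈ F, e ∈ G.edgeSet := by
    intro e he
    obtain ⟨i, -, hi⟩ := Finset.mem_biUnion.1 he
    obtain ⟨x, hx, y, hy, rfl⟩ := hE i e hi
    exact hadj i x hx y hy
  have hsub : (SimpleGraph.fromEdgeSet (F : Set (Sym2 V))).edgeSet ⊆ (F : Set (Sym2 V)) := by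
    rw [SimpleGraph.edgeSet_fromEdgeSet]
    exact Set.sdiff_subset
  have hF : ∀ i x y, s(x, y) ∈ E i →
      (SimpleGraph.fromEdgeSet (F : Set (Sym2 V))).Adj x y := by
    intro i x y h
    have hm : s(x, y) ∈ F := Finset.mem_biUnion.2 ⟨i, Finset.mem_univ i, h⟩
    have hG : G.Adj x y := hFG _ hm
    exact (SimpleGraph.fromEdgeSet_adj _).2 ⟨hm, hG.ne⟩
  have hwalk : ∀ i, ∀ u ∈ A i, ∀ v ∈ B i,
      ∃ p : (SimpleGraph.fromEdgeSet (F : Set (Sym2 V))).Walk u v, p.length ≤ 3 := by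
    intro i u hu v hv
    obtain ⟨a, b, h1, h2, h3⟩ := hpath i u hu v hv
    exact ⟨.cons (hF i _ _ h1) (.cons (hF i _ _ h2) (.cons (hF i _ _ h3) .nil)), by simp⟩
  refine ⟨SimpleGraph.fromEdgeSet (F : Set (Sym2 V)), ?_, F.finite_toSet.subset hsub, ?_, ?_⟩
  · intro x y h
    exact hFG _ ((SimpleGraph.fromEdgeSet_adj _).1 h).1
  · calc _ ≤ (F : Set (Sym2 V)).ncard := Set.ncard_le_ncard hsub F.finite_toSet
      _ = F.card := Set.ncard_coe_finset F
      _ ≤ ∑ i, (E i).card := Finset.card_biUnion_le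
      _ ≤ coverSize A B := Finset.sum_le_sum fun i _ => hcard i
  · intro u v h
    obtain ⟨i, ⟨hu, hv⟩ | ⟨hv, hu⟩⟩ := hcover u v h
    · exact hwalk i u hu v hv
    · obtain ⟨p, hp⟩ := hwalk i v hv u hu
      exact ⟨p.reverse, by simpa using hp⟩
end

section
/- For every integer d ≥ 0 there exists a constant C_d > 0 such that for all n ≥ 2, every d-dimensional comparability bigraph on n vertices admits a biclique partition of size at most C_d · n · (log₂ n)^d. -/
/-- Two naturals `a < b` agree above some bit `i` at which `a` has a `0` and `b` has a `1`; `p` is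
the common value of the higher bits. -/
lemma exists_bit_split (k : ℕ) : ∀ a b : ℕ, a < b → b < 2 ^ k →
    ∃ i < k, ∃ p < 2 ^ k, a / 2 ^ i = 2 * p ∧ b / 2 ^ i = 2 * p + 1 := by
  induction k with
  | zero => intro a b h1 h2; simp at h2; omega
  | succ k ih =>
    intro a b h1 h2
    rw [pow_succ] at h2
    by_cases h : a / 2 < b / 2
    · obtain ⟨i, hi, p, hp, h3, h4⟩ := ih _ _ h (by omega)
      refine ⟨i + 1, by omega, p, by rw [pow_succ]; omega, ?_, ?_⟩
      · rw [pow_succ', ← Nat.div_div_eq_div_mul, h3]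
      · rw [pow_succ', ← Nat.div_div_eq_div_mul, h4]
    · exact ⟨0, by omega, a / 2, by rw [pow_succ]; omega, by simp; omega, by simp; omega⟩

lemma bit_split_lt {a b i p : ℕ} (ha : a / 2 ^ i = 2 * p) (hb : b / 2 ^ i = 2 * p + 1) :
    a < b := by
  by_contra h
  have := Nat.div_le_div_right (c := 2 ^ i) (not_lt.mp h)
  omega

/-- Above the bit `i` the two numbers agree, so no split can occur at a higher bit. -/
lemma bit_split_le {a b i p i' p' : ℕ} (ha : a / 2 ^ i = 2 * p) (hb : b / 2 ^ i = 2 * p + 1)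
    (ha' : a / 2 ^ i' = 2 * p') (hb' : b / 2 ^ i' = 2 * p' + 1) : i' ≤ i := by
  by_contra h
  obtain ⟨t, rfl⟩ := Nat.exists_eq_add_of_lt (not_le.mp h)
  have e : 2 ^ (i + t + 1) = 2 ^ i * 2 * 2 ^ t := by ring
  have hh : a / 2 ^ i / 2 = b / 2 ^ i / 2 := by omega
  rw [e, ← Nat.div_div_eq_div_mul, ← Nat.div_div_eq_div_mul] at ha' hb'
  rw [hh] at ha'
  omega

lemma bit_split_unique {a b i p i' p' : ℕ} (ha : a / 2 ^ i = 2 * p) (hb : b / 2 ^ i = 2 * p + 1)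
    (ha' : a / 2 ^ i' = 2 * p') (hb' : b / 2 ^ i' = 2 * p' + 1) : i = i' ∧ p = p' := by
  have h : i = i' := le_antisymm (bit_split_le ha' hb' ha hb) (bit_split_le ha hb ha' hb')
  subst h
  exact ⟨rfl, by omega⟩

/-- Replacing real numbers by their ranks preserves strict comparisons. -/
lemma exists_rank {V : Type} [Fintype V] (f : V → ℝ) :
    ∃ rk : V → ℕ, (∀ v, rk v < Fintype.card V) ∧ ∀ u v, f u < f v ↔ rk u < rk v := by
  classical
  refine ⟨fun v => (Finset.univ.filter fun u => f u < f v).card, fun v => ?_, fun u v => ?_⟩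
  · apply Finset.card_lt_univ_of_notMem (x := v)
    simp
  · constructor
    · intro h
      apply Finset.card_lt_card
      refine ⟨fun w hw => ?_, fun hs => ?_⟩
      · simp at hw ⊢; linarith
      · have := hs (x := u) (by simpa using h)
        simp at this
    · intro h
      by_contra hn
      refine absurd h (not_lt.mpr (Finset.card_le_card fun w hw => ?_))
      simp at hw ⊢; linarith

/-- Every `d`-dimensional comparability bigraph on `n` vertices admits a
biclique partition of size `O(n (log₂ n)^d)`. -/
theorem stmt_4 (d : ℕ) :
    ∃ C : ℝ, 0 < C ∧ ∀ n : ℕ, 2 ≤ n → ∀ (V : Type) [Fintype V],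
      Fintype.card V = n →
      ∀ (G : SimpleGraph V) (L R : Set V) (φ : V → Fin d → ℝ),
      (∀ v, v ∈ L ∨ v ∈ R) → Disjoint L R →
      (∀ ℓ ∈ L, ∀ r ∈ R, ∀ j, φ ℓ j ≠ φ r j) →
      (∀ ℓ ∈ L, ∀ r ∈ R, (G.Adj ℓ r ↔ ∀ j, φ ℓ j < φ r j)) →
      (∀ u v, G.Adj u v → (u ∈ L ∧ v ∈ R) ∨ (u ∈ R ∧ v ∈ L)) →
      ∃ (m : ℕ) (A B : Fin m → Finset V),
        IsBicliquePartition G A B ∧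
        (coverSize A B : ℝ) ≤ C * (n : ℝ) * (Real.logb 2 n) ^ d := by
  classical
  refine ⟨2 ^ d, by positivity, ?_⟩
  intro n hn V _ hV G L R φ _ hdisj _ hadj hLR
  choose rk hrk_lt hrk using fun j => exists_rank (fun v => φ v j)
  set k := Nat.log 2 n + 1 with hk
  have hnk : n < 2 ^ k := Nat.lt_pow_succ_log_self (by norm_num) n
  let ι := Fin d → Fin k × Fin (2 ^ k)
  let A : ι → Finset V := fun x =>
    Finset.univ.filter fun v => v ∈ L ∧ ∀ j, rk j v / 2 ^ (x j).1.val = 2 * (x j).2.val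
  let B : ι → Finset V := fun x =>
    Finset.univ.filter fun v => v ∈ R ∧ ∀ j, rk j v / 2 ^ (x j).1.val = 2 * (x j).2.val + 1
  have mA : ∀ x v, v ∈ A x ↔ v ∈ L ∧ ∀ j, rk j v / 2 ^ (x j).1.val = 2 * (x j).2.val := by
    intro x v; simp [A]
  have mB : ∀ x v, v ∈ B x ↔ v ∈ R ∧ ∀ j, rk j v / 2 ^ (x j).1.val = 2 * (x j).2.val + 1 := by
    intro x v; simp [B]
  have hAB : ∀ x, Disjoint (A x) (B x) := fun x => Finset.disjoint_left.mpr fun v h1 h2 =>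
    Set.disjoint_left.mp hdisj ((mA x v).1 h1).1 ((mB x v).1 h2).1
  have key : ∀ u ∈ L, ∀ v ∈ R, G.Adj u v → ∃! x : ι, u ∈ A x ∧ v ∈ B x := by
    intro u hu v hv h
    have hlt := (hadj u hu v hv).1 h
    have hex : ∀ j, ∃ q : Fin k × Fin (2 ^ k),
        rk j u / 2 ^ q.1.val = 2 * q.2.val ∧ rk j v / 2 ^ q.1.val = 2 * q.2.val + 1 := by
      intro j
      obtain ⟨i, hi, p, hp, h1, h2⟩ := exists_bit_split k _ _ ((hrk j u v).1 (hlt j))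
        (by have := hrk_lt j v; omega)
      exact ⟨(⟨i, hi⟩, ⟨p, hp⟩), h1, h2⟩
    choose x hx using hex
    refine ⟨x, ⟨(mA _ _).2 ⟨hu, fun j => (hx j).1⟩, (mB _ _).2 ⟨hv, fun j => (hx j).2⟩⟩, ?_⟩
    rintro y ⟨h1, h2⟩
    funext j
    have := bit_split_unique (((mA _ _).1 h1).2 j) (((mB _ _).1 h2).2 j) (hx j).1 (hx j).2
    exact Prod.ext (Fin.ext this.1) (Fin.ext this.2)
  let e := Fintype.equivFin ι
  refine ⟨Fintype.card ι, fun i => A (e.symm i), fun i => B (e.symm i), ⟨?_, ?_, ?_⟩, ?_⟩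
  · exact fun i => hAB _
  · intro i a ha b hb
    rw [mA] at ha
    rw [mB] at hb
    exact (hadj a ha.1 b hb.1).2 fun j => (hrk j a b).2 (bit_split_lt (ha.2 j) (hb.2 j))
  · intro u v h
    -- The bicliques are oriented from `L` to `R`, so only one of the two alternatives is possible.
    rcases hLR u v h with ⟨hu, hv⟩ | ⟨hu, hv⟩
    · obtain ⟨x, hx, hux⟩ := key u hu v hv h
      refine ⟨e x, Or.inl (by simpa using hx), ?_⟩
      rintro y (hy | hy)
      · rw [← hux _ hy]; simp
      · exact absurd ((mA _ _).1 hy.1).1 (Set.disjoint_right.mp hdisj hv)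
    · obtain ⟨x, hx, hux⟩ := key v hv u hu h.symm
      refine ⟨e x, Or.inr (by simpa using hx), ?_⟩
      rintro y (hy | hy)
      · exact absurd ((mA _ _).1 hy.1).1 (Set.disjoint_right.mp hdisj hu)
      · rw [← hux _ hy]; simp
  · have hsize : coverSize (fun i => A (e.symm i)) (fun i => B (e.symm i)) ≤ n * k ^ d := by
      unfold coverSize
      rw [Equiv.sum_comp e.symm (fun x => (A x).card + (B x).card)]
      -- Both sides of the biclique `x` lie in the set of vertices whose bits above `i j` are `p j`.
      let r : ι → V → Prop := fun x v => ∀ j, rk j v / 2 ^ (x j).1.val / 2 = (x j).2.val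
      calc ∑ x, ((A x).card + (B x).card)
          ≤ ∑ x : ι, (Finset.univ.bipartiteAbove r x).card := by
            refine Finset.sum_le_sum fun x _ => ?_
            rw [← Finset.card_union_of_disjoint (hAB x)]
            refine Finset.card_le_card fun v hv => ?_
            rw [Finset.mem_bipartiteAbove]
            refine ⟨Finset.mem_univ _, fun j => ?_⟩
            rcases Finset.mem_union.1 hv with h | h
            · have := ((mA _ _).1 h).2 j; omega
            · have := ((mB _ _).1 h).2 j; omega
        _ = ∑ v : V, (Finset.univ.bipartiteBelow r v).card :=
            Finset.sum_card_bipartiteAbove_eq_sum_card_bipartiteBelow r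
        _ ≤ ∑ _v : V, k ^ d := by
            refine Finset.sum_le_sum fun v _ => ?_
            have hc : (Finset.univ : Finset (Fin d → Fin k)).card = k ^ d := by simp
            rw [← hc]
            refine Finset.card_le_card_of_injOn (fun x j => (x j).1) (by simp) ?_
            intro x hx y hy hxy
            simp only [Finset.mem_coe, Finset.mem_bipartiteBelow] at hx hy
            funext j
            have h1 : (x j).1 = (y j).1 := congrFun hxy j
            refine Prod.ext h1 (Fin.ext ?_)
            rw [← hx.2 j, ← hy.2 j, h1]
        _ = n * k ^ d := by simp [hV]
    have hlog1 : (1 : ℝ) ≤ Real.logb 2 n := by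
      rw [Real.le_logb_iff_rpow_le (by norm_num) (by positivity)]
      simpa using (by exact_mod_cast hn : (2 : ℝ) ≤ n)
    have hlog2 : (Nat.log 2 n : ℝ) ≤ Real.logb 2 n := by
      exact_mod_cast Real.natLog_le_logb n 2
    have hkle : (k : ℝ) ≤ 2 * Real.logb 2 n := by
      rw [hk]; push_cast; linarith
    calc ((coverSize (fun i => A (e.symm i)) (fun i => B (e.symm i)) : ℕ) : ℝ)
        ≤ n * (k : ℝ) ^ d := by exact_mod_cast hsize
      _ ≤ n * (2 * Real.logb 2 n) ^ d := by gcongr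
      _ = 2 ^ d * n * Real.logb 2 n ^ d := by rw [mul_pow]; ring
end

section
/- For every integer d ≥ 1 there exists a constant C_d > 0 such that for all n ≥ 2, every d-dimensional comparability graph on n vertices admits a biclique partition of size at most C_d · n · (log₂ n)^d. -/
/-- The highest digit in which `x < y` differ is a digit `0` of `x` and a digit `1` of `y`. -/
lemma exists_split_bit {x y L : ℕ} (hxy : x < y) (hy : y < 2 ^ L) :
    ∃ k < L, x / 2 ^ (k + 1) = y / 2 ^ (k + 1) ∧ x / 2 ^ k % 2 = 0 ∧ y / 2 ^ k % 2 = 1 := by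
  classical
  have hex : ∃ m, x / 2 ^ m = y / 2 ^ m :=
    ⟨L, by rw [Nat.div_eq_of_lt hy, Nat.div_eq_of_lt (hxy.trans hy)]⟩
  have hL : Nat.find hex ≤ L := Nat.find_min' hex
    (by rw [Nat.div_eq_of_lt hy, Nat.div_eq_of_lt (hxy.trans hy)])
  have hspec := Nat.find_spec hex
  have hmin := fun m => @Nat.find_min _ _ hex m
  generalize Nat.find hex = m at hL hspec hmin
  obtain _ | k := m
  · simp at hspec
    omega
  · have h1 : x / 2 ^ k ≠ y / 2 ^ k := hmin k (Nat.lt_succ_self k)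
    have h2 : x / 2 ^ k ≤ y / 2 ^ k := Nat.div_le_div_right hxy.le
    refine ⟨k, hL, hspec, ?_⟩
    rw [pow_succ, ← Nat.div_div_eq_div_mul, ← Nat.div_div_eq_div_mul] at hspec
    omega

lemma lt_of_split_bit {x y k : ℕ} (h : x / 2 ^ (k + 1) = y / 2 ^ (k + 1))
    (hx : x / 2 ^ k % 2 = 0) (hy : y / 2 ^ k % 2 = 1) : x < y := by
  rw [pow_succ, ← Nat.div_div_eq_div_mul, ← Nat.div_div_eq_div_mul] at h
  exact Nat.lt_of_div_lt_div (c := 2 ^ k) (by omega)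

/-- Agreement above position `k` forces agreement at every position beyond `k`. -/
lemma split_bit_le {x y k k' : ℕ} (h : x / 2 ^ (k + 1) = y / 2 ^ (k + 1))
    (hx : x / 2 ^ k' % 2 = 0) (hy : y / 2 ^ k' % 2 = 1) : k' ≤ k := by
  by_contra! hlt
  obtain ⟨c, rfl⟩ := Nat.exists_eq_add_of_le (Nat.succ_le_of_lt hlt)
  rw [pow_add, ← Nat.div_div_eq_div_mul] at hx hy
  simp only [Nat.succ_eq_add_one] at hx hy
  rw [h] at hx
  omega

lemma split_bit_unique {x y k k' : ℕ}
    (h : x / 2 ^ (k + 1) = y / 2 ^ (k + 1)) (hx : x / 2 ^ k % 2 = 0) (hy : y / 2 ^ k % 2 = 1)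
    (h' : x / 2 ^ (k' + 1) = y / 2 ^ (k' + 1)) (hx' : x / 2 ^ k' % 2 = 0)
    (hy' : y / 2 ^ k' % 2 = 1) : k = k' :=
  le_antisymm (split_bit_le h' hx hy) (split_bit_le h hx' hy')

/-- The number of points of the finite type `V` strictly below `v` with respect to `f`. -/
noncomputable def rankOf {V : Type} [Fintype V] (f : V → ℝ) (v : V) : ℕ :=
  (Finset.univ.filter (fun u => f u < f v)).card

lemma rankOf_lt_card {V : Type} [Fintype V] (f : V → ℝ) (v : V) :
    rankOf f v < Fintype.card V := by
  apply Finset.card_lt_univ_of_notMem (x := v)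
  simp

lemma rankOf_lt_iff {V : Type} [Fintype V] (f : V → ℝ) (u v : V) :
    rankOf f u < rankOf f v ↔ f u < f v := by
  constructor
  · intro h
    by_contra! hle
    refine absurd h (not_lt.mpr (Finset.card_le_card fun w hw => ?_))
    simp only [Finset.mem_filter, Finset.mem_univ, true_and] at hw ⊢
    exact hw.trans_le hle
  · intro h
    refine Finset.card_lt_card ((Finset.ssubset_iff_of_subset fun w hw => ?_).mpr ⟨u, ?_, ?_⟩)
    · simp only [Finset.mem_filter, Finset.mem_univ, true_and] at hw ⊢
      exact hw.trans h
    · simpa using h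
    · simp

/-- The vertices whose `j`-th rank has, for every coordinate `j`, prefix `i.2 j` above position
`i.1 j` and digit `b` at position `i.1 j`. -/
noncomputable def bicliqueSide {V : Type} [Fintype V] {d L n : ℕ} (r : V → Fin d → ℕ) (b : ℕ)
    (i : (Fin d → Fin L) × (Fin d → Fin n)) : Finset V :=
  Finset.univ.filter fun v =>
    ∀ j, r v j / 2 ^ ((i.1 j : ℕ) + 1) = i.2 j ∧ r v j / 2 ^ (i.1 j : ℕ) % 2 = b

lemma mem_bicliqueSide {V : Type} [Fintype V] {d L n : ℕ} {r : V → Fin d → ℕ} {b : ℕ}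
    {i : (Fin d → Fin L) × (Fin d → Fin n)} {v : V} :
    v ∈ bicliqueSide r b i ↔
      ∀ j, r v j / 2 ^ ((i.1 j : ℕ) + 1) = i.2 j ∧ r v j / 2 ^ (i.1 j : ℕ) % 2 = b := by
  simp [bicliqueSide]

lemma disjoint_bicliqueSide {V : Type} [Fintype V] {d L n : ℕ} (hd : 1 ≤ d)
    (r : V → Fin d → ℕ) (i : (Fin d → Fin L) × (Fin d → Fin n)) :
    Disjoint (bicliqueSide r 0 i) (bicliqueSide r 1 i) := by
  rw [Finset.disjoint_left]
  intro v h0 h1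
  have a := (mem_bicliqueSide.mp h0 ⟨0, hd⟩).2
  have b := (mem_bicliqueSide.mp h1 ⟨0, hd⟩).2
  omega

lemma lt_of_mem_bicliqueSide {V : Type} [Fintype V] {d L n : ℕ} {r : V → Fin d → ℕ}
    {i : (Fin d → Fin L) × (Fin d → Fin n)} {u v : V}
    (hu : u ∈ bicliqueSide r 0 i) (hv : v ∈ bicliqueSide r 1 i) (j : Fin d) : r u j < r v j := by
  have a := mem_bicliqueSide.mp hu j
  have b := mem_bicliqueSide.mp hv j
  exact lt_of_split_bit (a.1.trans b.1.symm) a.2 b.2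

lemma existsUnique_bicliqueSide {V : Type} [Fintype V] {d L n : ℕ} {r : V → Fin d → ℕ}
    (hn : ∀ v j, r v j < n) (hL : n ≤ 2 ^ L) {u v : V} (huv : ∀ j, r u j < r v j) :
    ∃! i : (Fin d → Fin L) × (Fin d → Fin n),
      u ∈ bicliqueSide r 0 i ∧ v ∈ bicliqueSide r 1 i := by
  choose k hkL hk using fun j => exists_split_bit (huv j) ((hn v j).trans_le hL)
  refine ⟨(fun j => ⟨k j, hkL j⟩,
    fun j => ⟨r u j / 2 ^ (k j + 1), (Nat.div_le_self _ _).trans_lt (hn u j)⟩), ?_, ?_⟩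
  · simp only [mem_bicliqueSide]
    exact ⟨fun j => ⟨trivial, (hk j).2.1⟩, fun j => ⟨(hk j).1.symm, (hk j).2.2⟩⟩
  · rintro ⟨k', p'⟩ ⟨hu, hv⟩
    rw [mem_bicliqueSide] at hu hv
    have hkk : ∀ j, (k' j : ℕ) = k j := fun j =>
      split_bit_unique ((hu j).1.trans (hv j).1.symm) (hu j).2 (hv j).2
        (hk j).1 (hk j).2.1 (hk j).2.2
    refine Prod.ext (funext fun j => Fin.ext (hkk j)) (funext fun j => Fin.ext ?_)
    have := (hu j).1
    simp only [hkk] at this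
    exact this.symm

/-- For a fixed vector of positions every vertex has one vector of prefixes, hence lies in at most
one of the bicliques; summing over the `L ^ d` vectors of positions gives the bound. -/
lemma sum_card_bicliqueSide_le {V : Type} [Fintype V] {d L n : ℕ} (hd : 1 ≤ d)
    {r : V → Fin d → ℕ} (hn : ∀ v j, r v j < n) :
    ∑ i : (Fin d → Fin L) × (Fin d → Fin n),
      ((bicliqueSide r 0 i).card + (bicliqueSide r 1 i).card) ≤ L ^ d * Fintype.card V := by
  classical
  rw [Fintype.sum_prod_type]
  have key : ∀ k : Fin d → Fin L, ∑ p : Fin d → Fin n,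
      ((bicliqueSide r 0 (k, p)).card + (bicliqueSide r 1 (k, p)).card) ≤ Fintype.card V := by
    intro k
    let P : V → Fin d → Fin n := fun v j =>
      ⟨r v j / 2 ^ ((k j : ℕ) + 1), (Nat.div_le_self _ _).trans_lt (hn v j)⟩
    rw [← Finset.card_univ, Finset.card_eq_sum_card_fiberwise (f := P) (t := Finset.univ)
      (fun _ _ => by simp)]
    refine Finset.sum_le_sum fun p _ => ?_
    rw [← Finset.card_union_of_disjoint (disjoint_bicliqueSide hd r _)]
    refine Finset.card_le_card fun v hv => ?_
    rw [Finset.mem_filter]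
    refine ⟨Finset.mem_univ _, funext fun j => Fin.ext ?_⟩
    rcases Finset.mem_union.mp hv with h | h
    · exact (mem_bicliqueSide.mp h j).1
    · exact (mem_bicliqueSide.mp h j).1
  calc _ ≤ ∑ _k : Fin d → Fin L, Fintype.card V := Finset.sum_le_sum fun k _ => key k
    _ = _ := by simp

lemma clog_le_two_mul_logb {n : ℕ} (hn : 2 ≤ n) :
    (Nat.clog 2 n : ℝ) ≤ 2 * Real.logb 2 n := by
  have h1 : (1 : ℝ) ≤ Real.logb 2 n := by
    rw [Real.le_logb_iff_rpow_le (by norm_num) (by positivity)]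
    simpa using (by exact_mod_cast hn : (2 : ℝ) ≤ n)
  have h2 : Nat.clog 2 n ≤ Nat.log 2 n + 1 :=
    Nat.clog_le_of_le_pow (Nat.lt_pow_succ_log_self (by norm_num) n).le
  have h3 : (Nat.log 2 n : ℝ) ≤ Real.logb 2 n := by
    exact_mod_cast Real.natLog_le_logb n 2
  have h4 : (Nat.clog 2 n : ℝ) ≤ Nat.log 2 n + 1 := by exact_mod_cast h2
  linarith

/-- Every `d`-dimensional comparability graph on `n` vertices admits a
biclique partition of size `O(n (log₂ n)^d)`. -/
theorem stmt_5 (d : ℕ) (hd : 1 ≤ d) :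
    ∃ C : ℝ, 0 < C ∧ ∀ n : ℕ, 2 ≤ n → ∀ (V : Type) [Fintype V],
      Fintype.card V = n →
      ∀ (G : SimpleGraph V) (φ : V → Fin d → ℝ),
      (∀ u v : V, u ≠ v → ∀ j, φ u j ≠ φ v j) →
      (∀ u v : V, G.Adj u v ↔ ((∀ j, φ u j < φ v j) ∨ (∀ j, φ v j < φ u j))) →
      ∃ (m : ℕ) (A B : Fin m → Finset V),
        IsBicliquePartition G A B ∧
        (coverSize A B : ℝ) ≤ C * (n : ℝ) * (Real.logb 2 n) ^ d := by
  refine ⟨2 ^ d, by positivity, ?_⟩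
  intro n hn V _ hV G φ _ hG
  let L := Nat.clog 2 n
  let r : V → Fin d → ℕ := fun v j => rankOf (fun w => φ w j) v
  have hr : ∀ v j, r v j < n := fun v j => hV ▸ rankOf_lt_card _ v
  have hrφ : ∀ u v j, r u j < r v j ↔ φ u j < φ v j := fun u v j =>
    rankOf_lt_iff (fun w => φ w j) u v
  have hL : n ≤ 2 ^ L := Nat.le_pow_clog (by norm_num) n
  let e := (Fintype.equivFin ((Fin d → Fin L) × (Fin d → Fin n))).symm
  -- An increasing pair is covered once in the orientation `(A, B)` and never in the other.
  have huniq : ∀ u v : V, (∀ j, φ u j < φ v j) →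
      ∃! i, (u ∈ bicliqueSide r 0 (e i) ∧ v ∈ bicliqueSide r 1 (e i)) ∨
        (v ∈ bicliqueSide r 0 (e i) ∧ u ∈ bicliqueSide r 1 (e i)) := by
    intro u v huv
    have hlt : ∀ j, r u j < r v j := fun j => (hrφ u v j).mpr (huv j)
    obtain ⟨i, hi, hi'⟩ := existsUnique_bicliqueSide hr hL hlt
    refine ⟨e.symm i, Or.inl (by simpa using hi), ?_⟩
    rintro i₂ (h | h)
    · rw [← hi' _ h, Equiv.symm_apply_apply]
    · exact absurd (lt_of_mem_bicliqueSide h.1 h.2 ⟨0, hd⟩) (hlt ⟨0, hd⟩).not_gt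
  refine ⟨_, fun i => bicliqueSide r 0 (e i), fun i => bicliqueSide r 1 (e i),
    ⟨fun i => disjoint_bicliqueSide hd r _, fun i a ha b hb => ?_, fun u v huv => ?_⟩, ?_⟩
  · exact (hG a b).mpr (Or.inl fun j => (hrφ a b j).mp (lt_of_mem_bicliqueSide ha hb j))
  · rcases (hG u v).mp huv with h | h
    · exact huniq u v h
    · simpa only [or_comm] using huniq v u h
  · have hsize : coverSize (fun i => bicliqueSide r 0 (e i)) (fun i => bicliqueSide r 1 (e i))
        ≤ L ^ d * n := by
      unfold coverSize
      rw [Equiv.sum_comp e fun i => (bicliqueSide r 0 i).card + (bicliqueSide r 1 i).card]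
      exact (sum_card_bicliqueSide_le hd hr).trans_eq (by rw [hV])
    calc _ ≤ ((L ^ d * n : ℕ) : ℝ) := by exact_mod_cast hsize
      _ = (L : ℝ) ^ d * n := by push_cast; rfl
      _ ≤ (2 * Real.logb 2 n) ^ d * n := by
        gcongr
        exact clog_le_two_mul_logb hn
      _ = 2 ^ d * (n : ℝ) * Real.logb 2 n ^ d := by rw [mul_pow]; ring
end

section
/- For all integers t ≥ 1, ℓ ≥ 1, d ≥ 1 and s ≥ 1 there exists a constant C = C(t, ℓ) > 0 such that for all n ≥ 2, every dnf-semilinear graph of complexity (t, ℓ) in dimension d on n vertices that contains no K_{s,s} subgraph has at most C · s · n · (log₂ n)^{t+1} edges. -/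
open Finset

/-- There is no `r × r` biclique of the relation `R` with sides in `A` and `B`. The two sides
may overlap as sets of vertices. -/
def BiFree {V : Type*} (r : ℕ) (R : V → V → Prop) (A B : Finset V) : Prop :=
  ¬ ∃ S T : Finset V, S ⊆ A ∧ T ⊆ B ∧ S.card = r ∧ T.card = r ∧ ∀ u ∈ S, ∀ v ∈ T, R u v

open Classical in
/-- The number of pairs in `A × B` related by `R`. -/
noncomputable def pairCount {V : Type*} (R : V → V → Prop) (A B : Finset V) : ℕ :=
  ((A ×ˢ B).filter fun p => R p.1 p.2).card

/-- On any `A × B` without an `r × r` biclique, `R` has at most `M * (|A| + |B|)` pairs. -/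
def BiBound {V : Type*} (r M : ℕ) (R : V → V → Prop) : Prop :=
  ∀ A B : Finset V, BiFree r R A B → pairCount R A B ≤ M * (A.card + B.card)

lemma BiFree.mono {V : Type*} {r : ℕ} {R R' : V → V → Prop} {A B A' B' : Finset V}
    (h : BiFree r R A B) (hA : A' ⊆ A) (hB : B' ⊆ B)
    (hR : ∀ u ∈ A', ∀ v ∈ B', R' u v → R u v) : BiFree r R' A' B' := by
  rintro ⟨S, T, hS, hT, hSc, hTc, hST⟩
  exact h ⟨S, T, hS.trans hA, hT.trans hB, hSc, hTc,
    fun u hu v hv => hR u (hS hu) v (hT hv) (hST u hu v hv)⟩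

lemma biBound_true {V : Type*} (r : ℕ) : BiBound r r (fun _ _ : V => True) := by
  intro A B h
  have hc : pairCount (fun _ _ : V => True) A B = A.card * B.card := by
    simp [pairCount]
  rw [hc]
  have : A.card < r ∨ B.card < r := by
    by_contra! hcon
    obtain ⟨S, hS, hSc⟩ := exists_subset_card_eq hcon.1
    obtain ⟨T, hT, hTc⟩ := exists_subset_card_eq hcon.2
    exact h ⟨S, T, hS, hT, hSc, hTc, fun _ _ _ _ => trivial⟩
  rcases this with h | h <;> nlinarith

/-- The dyadic recursion in one coordinate whose values lie in `[o, o + 2 ^ k)`. -/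
lemma count_dyadic {V : Type*} {r M : ℕ} {R : V → V → Prop} (hR : BiBound r M R)
    (f g : V → ℕ) (k : ℕ) : ∀ (o : ℕ) (A B : Finset V),
    (∀ u ∈ A, o ≤ f u ∧ f u < o + 2 ^ k) → (∀ v ∈ B, o ≤ g v ∧ g v < o + 2 ^ k) →
    BiFree r (fun u v => R u v ∧ f u < g v) A B →
    pairCount (fun u v => R u v ∧ f u < g v) A B ≤ k * M * (A.card + B.card) := by
  classical
  induction k with
  | zero =>
    intro o A B hA hB _
    simp only [zero_mul, Nat.le_zero_eq, pairCount, card_eq_zero, filter_eq_empty_iff,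
      mem_product]
    rintro ⟨u, v⟩ ⟨hu, hv⟩ ⟨_, hlt⟩
    have := hA u hu
    have := hB v hv
    simp only at *
    omega
  | succ k ih =>
    intro o A B hA hB hF
    set A₀ := A.filter (fun u => f u < o + 2 ^ k) with hA₀
    set A₁ := A.filter (fun u => ¬ f u < o + 2 ^ k) with hA₁
    set B₀ := B.filter (fun v => g v < o + 2 ^ k) with hB₀
    set B₁ := B.filter (fun v => ¬ g v < o + 2 ^ k) with hB₁
    have cA : A₀.card + A₁.card = A.card := card_filter_add_card_filter_not _
    have cB : B₀.card + B₁.card = B.card := card_filter_add_card_filter_not _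
    have h00 := ih o A₀ B₀
      (fun u hu => by
        rw [hA₀, mem_filter] at hu; exact ⟨(hA u hu.1).1, hu.2⟩)
      (fun v hv => by
        rw [hB₀, mem_filter] at hv; exact ⟨(hB v hv.1).1, hv.2⟩)
      (hF.mono (filter_subset _ _) (filter_subset _ _) fun _ _ _ _ h => h)
    have h11 := ih (o + 2 ^ k) A₁ B₁
      (fun u hu => by
        rw [hA₁, mem_filter] at hu
        have := hA u hu.1
        rw [pow_succ] at this
        omega)
      (fun v hv => by
        rw [hB₁, mem_filter] at hv
        have := hB v hv.1
        rw [pow_succ] at this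
        omega)
      (hF.mono (filter_subset _ _) (filter_subset _ _) fun _ _ _ _ h => h)
    have h01 := hR A₀ B₁ (hF.mono (filter_subset _ _) (filter_subset _ _) (by
      intro u hu v hv h
      rw [hA₀, mem_filter] at hu
      rw [hB₁, mem_filter] at hv
      exact ⟨h, by omega⟩))
    have hsum : pairCount (fun u v => R u v ∧ f u < g v) A B ≤
        pairCount (fun u v => R u v ∧ f u < g v) A₀ B₀ +
        pairCount (fun u v => R u v ∧ f u < g v) A₁ B₁ + pairCount R A₀ B₁ := by
      unfold pairCount
      refine le_trans (card_le_card ?_) ((card_union_le _ _).trans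
        (Nat.add_le_add_right (card_union_le _ _) _))
      rintro ⟨u, v⟩ huv
      simp only [mem_filter, mem_product, mem_union, hA₀, hA₁, hB₀, hB₁] at huv ⊢
      obtain ⟨⟨hu, hv⟩, hr, hlt⟩ := huv
      by_cases h1 : f u < o + 2 ^ k <;> by_cases h2 : g v < o + 2 ^ k
      · simp [*]
      · simp [*]
      · omega
      · simp [*]
    calc _ ≤ _ := hsum
      _ ≤ k * M * (A₀.card + B₀.card) + k * M * (A₁.card + B₁.card) +
          M * (A₀.card + B₁.card) := by gcongr
      _ ≤ k * M * (A₀.card + B₀.card) + k * M * (A₁.card + B₁.card) +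
          M * (A.card + B.card) := by
        gcongr
        · exact filter_subset _ _
        · exact filter_subset _ _
      _ = (k + 1) * M * (A.card + B.card) := by rw [← cA, ← cB]; ring

lemma biBound_coords {V : Type*} (r K t : ℕ) (x y : ℕ → V → ℕ)
    (hx : ∀ j u, x j u < 2 ^ K) (hy : ∀ j u, y j u < 2 ^ K) :
    BiBound r (r * K ^ t) (fun u v => ∀ j < t, x j u < y j v) := by
  induction t with
  | zero => simpa using biBound_true (V := V) r
  | succ t ih =>
    have he : (fun u v : V => ∀ j < t + 1, x j u < y j v) =
        fun u v => (∀ j < t, x j u < y j v) ∧ x t u < y t v := by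
      funext u v
      simp only [Nat.forall_lt_succ_right]
    rw [he]
    intro A B hF
    have := count_dyadic ih (x t) (y t) K 0 A B (fun u _ => by simpa using hx t u)
      (fun u _ => by simpa using hy t u) hF
    refine this.trans (le_of_eq ?_)
    ring

/-- Ranking a real `z` by the number of values `y w ≤ z` preserves every comparison `z < y v`. -/
lemma rank_lt_iff {V : Type*} [Fintype V] (y : V → ℝ) (z : ℝ) (v : V) :
    (univ.filter fun w => y w ≤ z).card < (univ.filter fun w => y w ≤ y v).card ↔
      z < y v := by
  constructor
  · intro h
    by_contra! hcon
    refine absurd h (not_lt.mpr (card_le_card ?_))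
    intro w hw
    simp only [mem_filter, mem_univ, true_and] at hw ⊢
    exact hw.trans hcon
  · intro h
    refine card_lt_card ⟨?_, ?_⟩
    · intro w hw
      simp only [mem_filter, mem_univ, true_and] at hw ⊢
      exact hw.trans h.le
    · intro hsub
      have : v ∈ univ.filter fun w => y w ≤ z := hsub (by simp)
      simp only [mem_filter, mem_univ, true_and] at this
      exact absurd h (not_lt.mpr this)

/-- The bound for one clause, with real coordinates. -/
lemma count_real {V : Type*} [Fintype V] (r K t : ℕ) (hK : Fintype.card V < 2 ^ K)
    (x y : Fin t → V → ℝ) (hF : BiFree r (fun u v => ∀ j, x j u < y j v) univ univ) :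
    pairCount (fun u v => ∀ j, x j u < y j v) univ univ ≤
      r * K ^ t * (Fintype.card V + Fintype.card V) := by
  let X : ℕ → V → ℕ := fun j u =>
    if h : j < t then (univ.filter fun w => y ⟨j, h⟩ w ≤ x ⟨j, h⟩ u).card else 0
  let Y : ℕ → V → ℕ := fun j v =>
    if h : j < t then (univ.filter fun w => y ⟨j, h⟩ w ≤ y ⟨j, h⟩ v).card else 0
  have hX : ∀ j u, X j u < 2 ^ K := by
    intro j u
    simp only [X]
    split_ifs
    · exact (card_le_univ _).trans_lt hK
    · positivity
  have hY : ∀ j u, Y j u < 2 ^ K := by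
    intro j u
    simp only [Y]
    split_ifs
    · exact (card_le_univ _).trans_lt hK
    · positivity
  have he : (fun u v : V => ∀ j, x j u < y j v) = fun u v => ∀ j < t, X j u < Y j v := by
    funext u v
    refine propext ⟨fun h j hj => ?_, fun h j => ?_⟩
    · simp only [X, Y, dif_pos hj]
      exact (rank_lt_iff _ _ _).2 (h _)
    · have := h j j.2
      simp only [X, Y, dif_pos j.2] at this
      exact (rank_lt_iff _ _ _).1 this
  rw [he] at hF ⊢
  exact biBound_coords r K t X Y hX hY univ univ hF

/-- Every `K_{s,s}`-free dnf-semilinear graph of complexity `(t, ℓ)` in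
dimension `d` on `n` vertices has at most `O(s · n (log₂ n)^{t+1})` edges,
where the constant depends only on `t` and `ℓ`. -/
theorem stmt_7 (t l : ℕ) (ht : 1 ≤ t) (hl : 1 ≤ l) :
    ∃ C : ℝ, 0 < C ∧ ∀ d : ℕ, 1 ≤ d → ∀ s : ℕ, 1 ≤ s → ∀ n : ℕ, 2 ≤ n →
      ∀ (V : Type) [Fintype V] [DecidableEq V], Fintype.card V = n →
      ∀ (G : SimpleGraph V) (φ : V → Fin d → ℝ)
        (a b : Fin l → Fin t → Fin d → ℝ) (c : Fin l → Fin t → ℝ),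
      (∀ u v : V, u ≠ v →
        (G.Adj u v ↔ ∃ i : Fin l, ∀ j : Fin t,
          (∑ k, a i j k * φ u k) + (∑ k, b i j k * φ v k) + c i j < 0)) →
      (¬ ∃ S T : Finset V, Disjoint S T ∧ S.card = s ∧ T.card = s ∧
        ∀ x ∈ S, ∀ y ∈ T, G.Adj x y) →
      (G.edgeSet.ncard : ℝ) ≤ C * (s : ℝ) * (n : ℝ) * (Real.logb 2 n) ^ (t + 1) := by
  classical
  refine ⟨l * 4 * 2 ^ t, by positivity, ?_⟩
  intro d _ s _ n hn V _ _ hcard G φ a b c hadj hfree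
  let x : Fin l → Fin t → V → ℝ := fun i j u => (∑ k, a i j k * φ u k) + c i j
  let y : Fin l → Fin t → V → ℝ := fun i j v => -∑ k, b i j k * φ v k
  let R : Fin l → V → V → Prop := fun i u v => ∀ j, x i j u < y i j v
  have hadj' : ∀ u v : V, u ≠ v → (G.Adj u v ↔ ∃ i, R i u v) := by
    intro u v huv
    rw [hadj u v huv]
    refine exists_congr fun i => forall_congr' fun j => ?_
    simp only [x, y]
    constructor <;> intro h <;> linarith
  have hRfree : ∀ i, BiFree (2 * s) (R i) univ univ := by
    rintro i ⟨S, T, -, -, hS, hT, hST⟩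
    -- Shrink to disjoint sides: `s` vertices of `S`, then `s` of the remaining vertices of `T`.
    obtain ⟨S', hS', hS'c⟩ := exists_subset_card_eq (s := S) (n := s) (by omega)
    have h1 : s ≤ (T \ S').card := by
      have := le_card_sdiff S' T
      omega
    obtain ⟨T', hT', hT'c⟩ := exists_subset_card_eq h1
    have hdis : Disjoint S' T' := disjoint_sdiff.mono_right hT'
    refine hfree ⟨S', T', hdis, hS'c, hT'c, fun u hu v hv => ?_⟩
    have huv : u ≠ v := fun h => disjoint_left.1 hdis hu (h ▸ hv)
    exact (hadj' u v huv).2 ⟨i, hST u (hS' hu) v (mem_sdiff.1 (hT' hv)).1⟩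
  set K := Nat.log 2 n + 1 with hK
  have hnK : Fintype.card V < 2 ^ K := by
    rw [hcard]
    exact Nat.lt_pow_succ_log_self (by norm_num) n
  have hcount : ∀ i, pairCount (R i) univ univ ≤ 2 * s * K ^ t * (n + n) := by
    intro i
    have := count_real (2 * s) K t hnK (x i) (y i) (hRfree i)
    rwa [hcard] at this
  have hedges : G.edgeSet.ncard ≤ l * (2 * s * K ^ t * (n + n)) := by
    have hsub : G.edgeSet ⊆ (((univ : Finset (Fin l)).biUnion fun i =>
        ((univ ×ˢ univ).filter fun p : V × V => R i p.1 p.2).image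
          fun p => s(p.1, p.2) : Finset (Sym2 V)) : Set (Sym2 V)) := by
      intro e
      induction e using Sym2.ind with
      | _ u v =>
        intro h
        rw [SimpleGraph.mem_edgeSet] at h
        obtain ⟨i, hi⟩ := (hadj' u v h.ne).1 h
        simp only [mem_coe, mem_biUnion, mem_univ, true_and, mem_image]
        exact ⟨i, (u, v), by simpa using hi, rfl⟩
    calc G.edgeSet.ncard ≤ _ := Set.ncard_le_ncard hsub (finite_toSet _)
      _ = _ := Set.ncard_coe_finset _
      _ ≤ ∑ i : Fin l, _ := card_biUnion_le
      _ ≤ ∑ _i : Fin l, 2 * s * K ^ t * (n + n) := by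
        refine sum_le_sum fun i _ => card_image_le.trans (le_trans (le_of_eq ?_) (hcount i))
        unfold pairCount
        congr!
      _ = _ := by simp
  set L := Real.logb 2 n with hL
  have hL1 : 1 ≤ L := by
    rw [hL, Real.le_logb_iff_rpow_le (by norm_num) (by positivity)]
    simpa using (by exact_mod_cast hn : (2 : ℝ) ≤ n)
  have hKL : (K : ℝ) ≤ 2 * L := by
    have : (Nat.log 2 n : ℝ) ≤ L := by exact_mod_cast Real.natLog_le_logb n 2
    rw [hK]
    push_cast
    linarith
  calc (G.edgeSet.ncard : ℝ) ≤ l * (2 * s * (K : ℝ) ^ t * (n + n)) := by exact_mod_cast hedges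
    _ ≤ l * (2 * s * (2 * L) ^ t * (n + n)) := by gcongr
    _ = l * 4 * 2 ^ t * s * n * L ^ t := by rw [mul_pow]; ring
    _ ≤ l * 4 * 2 ^ t * s * n * L ^ (t + 1) := by
      gcongr
      omega
end

section
/- Every capped bigraph is a two-dimensional comparability bigraph: if G = (L ∪ R, E) is a finite bipartite graph where L, R ⊆ ℕ, every edge joins L to R, and for all i < j in L and k < ℓ in R, ik ∈ E and jℓ ∈ E imply iℓ ∈ E, then there exists a map φ : L ∪ R → ℝ² such that for all ℓ ∈ L and r ∈ R, ℓr ∈ E if and only if both coordinates of φ(ℓ) are strictly smaller than the corresponding coordinates of φ(r). -/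
/-- A strict real threshold for lying weakly above some element of `S` satisfying `p`. -/
lemma exists_lower_threshold (S : Finset ℕ) (p : ℕ → Prop) :
    ∃ x : ℝ, ∀ l ∈ S, (x < l ↔ ∃ k ∈ S, k ≤ l ∧ p k) := by
  classical
  by_cases h : ∃ k, k ∈ S ∧ p k
  · have hm := Nat.find_spec h
    refine ⟨(Nat.find h : ℝ) - 1 / 2, fun l _ => ⟨fun hl => ⟨Nat.find h, hm.1, ?_, hm.2⟩, ?_⟩⟩
    · have : (Nat.find h : ℝ) < ((l + 1 : ℕ) : ℝ) := by push_cast; linarith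
      exact Nat.lt_succ_iff.mp (by exact_mod_cast this)
    · rintro ⟨k, hk, hkl, hpk⟩
      have : (Nat.find h : ℝ) ≤ l := by exact_mod_cast (Nat.find_min' h ⟨hk, hpk⟩).trans hkl
      linarith
  · refine ⟨(S.sup id : ℕ), fun l hl => ⟨fun hlt => ?_,
      fun ⟨k, hk, _, hpk⟩ => absurd ⟨k, hk, hpk⟩ h⟩⟩
    have h1 : l ≤ S.sup id := Finset.le_sup (f := id) hl
    have h2 : S.sup id < l := by exact_mod_cast hlt
    omega

/-- A strict real threshold for lying weakly below some element of `S` satisfying `p`. -/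
lemma exists_upper_threshold (S : Finset ℕ) (p : ℕ → Prop) :
    ∃ y : ℝ, ∀ i : ℕ, ((i : ℝ) - 1 / 2 < y ↔ ∃ j ∈ S, i ≤ j ∧ p j) := by
  classical
  by_cases h : (S.filter p).Nonempty
  · obtain ⟨M, hM, hmax⟩ := (S.filter p).exists_max_image id h
    rw [Finset.mem_filter] at hM
    refine ⟨M, fun i => ⟨fun hi => ⟨M, hM.1, ?_, hM.2⟩, ?_⟩⟩
    · have : (i : ℝ) < ((M + 1 : ℕ) : ℝ) := by push_cast; linarith
      exact Nat.lt_succ_iff.mp (by exact_mod_cast this)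
    · rintro ⟨j, hj, hij, hpj⟩
      have : (i : ℝ) ≤ M := by
        exact_mod_cast hij.trans (hmax j (Finset.mem_filter.mpr ⟨hj, hpj⟩))
      linarith
  · refine ⟨-1, fun i => ⟨fun hi => ?_, fun ⟨j, hj, _, hpj⟩ =>
      absurd ⟨j, Finset.mem_filter.mpr ⟨hj, hpj⟩⟩ h⟩⟩
    have : (0 : ℝ) ≤ i := i.cast_nonneg
    linarith

/-- Every capped bigraph is a two-dimensional comparability bigraph. -/
theorem stmt_8 (L R : Finset ℕ) (hdisj : Disjoint L R) (E : ℕ → ℕ → Prop)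
    (hX : ∀ i ∈ L, ∀ j ∈ L, ∀ k ∈ R, ∀ l ∈ R,
      i < j → k < l → E i k → E j l → E i l) :
    ∃ φ : ℕ → ℝ × ℝ, ∀ ℓ ∈ L, ∀ r ∈ R,
      (E ℓ r ↔ (φ ℓ).1 < (φ r).1 ∧ (φ ℓ).2 < (φ r).2) := by
  classical
  choose m hm using fun i => exists_lower_threshold R (E i)
  choose M hM using fun r => exists_upper_threshold L (fun j => E j r)
  refine ⟨fun v => if v ∈ L then (m v, (v : ℝ) - 1 / 2) else ((v : ℝ), M v), fun i hi r hr => ?_⟩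
  have hrL : r ∉ L := Finset.disjoint_right.mp hdisj hr
  simp only [if_pos hi, if_neg hrL]
  rw [hm i r hr, hM r i]
  refine ⟨fun h => ⟨⟨r, hr, le_rfl, h⟩, ⟨i, hi, le_rfl, h⟩⟩, ?_⟩
  rintro ⟨⟨k, hk, hkr, hik⟩, ⟨j, hj, hij, hjr⟩⟩
  rcases hkr.eq_or_lt with rfl | hkr
  · exact hik
  rcases hij.eq_or_lt with rfl | hij
  · exact hjr
  exact hX i hi j hj k hk r hr hij hkr hik hjr
end

section
/- There exists a constant C > 0 such that for all n ≥ 2, every capped graph on n vertices admits a biclique cover of size at most C · n · (log₂ n)³. -/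
/-- Two numbers `x < y` are separated into sibling dyadic blocks by their top differing bit `t`. -/
lemma exists_split (K : ℕ) : ∀ x y : ℕ, x < y → y < 2 ^ K →
    ∃ t < K, ∃ c < 2 ^ K, x / 2 ^ t = 2 * c ∧ y / 2 ^ t = 2 * c + 1 := by
  induction K with
  | zero => intro x y h1 h2; simp at h2; omega
  | succ K ih =>
    intro x y h1 h2
    rw [pow_succ] at h2 ⊢
    by_cases h : x / 2 < y / 2
    · obtain ⟨t, ht, c, hc, h3, h4⟩ := ih (x / 2) (y / 2) h (by omega)
      refine ⟨t + 1, by omega, c, by omega, ?_, ?_⟩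
      · rw [pow_succ', ← Nat.div_div_eq_div_mul, h3]
      · rw [pow_succ', ← Nat.div_div_eq_div_mul, h4]
    · refine ⟨0, by omega, x / 2, by omega, ?_, ?_⟩ <;> simp <;> omega

lemma lt_of_split {x y t c : ℕ} (hx : x / 2 ^ t = 2 * c) (hy : y / 2 ^ t = 2 * c + 1) :
    x < y := by
  by_contra h
  have := Nat.div_le_div_right (c := 2 ^ t) (not_lt.mp h)
  omega

section Construction

variable {n : ℕ} (G : SimpleGraph (Fin n))

/-- The neighbours of `i` in the dyadic block number `d` of length `2 ^ t`. -/
def nbrs (t d : ℕ) (i : Fin n) : Set ℕ :=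
  {k | ∃ h : k < n, G.Adj i ⟨k, h⟩ ∧ k / 2 ^ t = d}

open Classical in
/-- Left side of the biclique with bit positions `t` and block numbers `c`. The nonemptiness
condition makes `sInf` the genuine least neighbour in the right block. -/
noncomputable def sideA (t c : ℕ × ℕ × ℕ) : Finset (Fin n) :=
  {i | (nbrs G t.1 (2 * c.1 + 1) i).Nonempty ∧ i.val / 2 ^ t.1 = 2 * c.1 ∧
    sInf (nbrs G t.1 (2 * c.1 + 1) i) / 2 ^ t.2.1 = 2 * c.2.1 ∧
    i.val / 2 ^ t.2.2 = 2 * c.2.2}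

open Classical in
/-- Right side of the biclique with bit positions `t` and block numbers `c`. The nonemptiness
condition makes `sSup` the genuine greatest neighbour in the left block. -/
noncomputable def sideB (t c : ℕ × ℕ × ℕ) : Finset (Fin n) :=
  {l | (nbrs G t.1 (2 * c.1) l).Nonempty ∧ l.val / 2 ^ t.1 = 2 * c.1 + 1 ∧
    (l.val + 1) / 2 ^ t.2.1 = 2 * c.2.1 + 1 ∧
    (sSup (nbrs G t.1 (2 * c.1) l) + 1) / 2 ^ t.2.2 = 2 * c.2.2 + 1}

lemma nbrs_bddAbove (t d : ℕ) (i : Fin n) : BddAbove (nbrs G t d i) :=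
  ⟨n, fun _ hk => hk.1.le⟩

lemma adj_of_mem
    (hG : ∀ i j k l : Fin n, i < j → j < k → k < l → G.Adj i k → G.Adj j l → G.Adj i l)
    {t c : ℕ × ℕ × ℕ} {i l : Fin n} (hi : i ∈ sideA G t c) (hl : l ∈ sideB G t c) :
    G.Adj i l := by
  simp only [sideA, sideB, Finset.mem_filter, Finset.mem_univ, true_and] at hi hl
  obtain ⟨hi0, hi1, hi2, hi3⟩ := hi
  obtain ⟨hl0, hl1, hl2, hl3⟩ := hl
  obtain ⟨hk, hik, hkb⟩ := Nat.sInf_mem hi0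
  obtain ⟨hj, hlj, hjb⟩ := Nat.sSup_mem hl0 (nbrs_bddAbove G _ _ l)
  have h1 := lt_of_split hi2 hl2
  have h2 := lt_of_split hi3 hl3
  have h3 := lt_of_split hjb hkb
  generalize sInf (nbrs G t.1 (2 * c.1 + 1) i) = k at *
  generalize sSup (nbrs G t.1 (2 * c.1) l) = j at *
  rcases Nat.lt_succ_iff_lt_or_eq.mp h1 with h1 | h1
  · rcases Nat.lt_succ_iff_lt_or_eq.mp h2 with h2 | h2
    · exact hG i ⟨j, hj⟩ ⟨k, hk⟩ l h2 h3 h1 hik hlj.symm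
    · have : i = ⟨j, hj⟩ := Fin.ext h2
      rw [this]; exact hlj.symm
  · have : l = ⟨k, hk⟩ := Fin.ext h1.symm
    rw [this]; exact hik

lemma exists_mem {K : ℕ} (hK : n < 2 ^ K) {i l : Fin n} (hil : i < l) (h : G.Adj i l) :
    ∃ t c : Fin 3 → ℕ, (∀ x, t x < K) ∧ (∀ x, c x < 2 ^ K) ∧
      i ∈ sideA G (t 0, t 1, t 2) (c 0, c 1, c 2) ∧
      l ∈ sideB G (t 0, t 1, t 2) (c 0, c 1, c 2) := by
  have hln := l.2
  have hin := i.2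
  obtain ⟨t₀, ht₀, c₀, hc₀, hi, hl⟩ := exists_split K i l hil (by omega)
  have hkm : l.val ∈ nbrs G t₀ (2 * c₀ + 1) i := ⟨l.2, h, hl⟩
  have hjm : i.val ∈ nbrs G t₀ (2 * c₀) l := ⟨i.2, h.symm, hi⟩
  have hk := Nat.sInf_le hkm
  have hj := le_csSup (nbrs_bddAbove G _ _ l) hjm
  have hjn := (Nat.sSup_mem ⟨_, hjm⟩ (nbrs_bddAbove G _ _ l)).1
  obtain ⟨t₁, ht₁, c₁, hc₁, h1, h1'⟩ := exists_split K _ _ (Nat.lt_succ_of_le hk) (by omega)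
  obtain ⟨t₂, ht₂, c₂, hc₂, h2, h2'⟩ := exists_split K _ _ (Nat.lt_succ_of_le hj) (by omega)
  refine ⟨![t₀, t₁, t₂], ![c₀, c₁, c₂], ?_, ?_, ?_, ?_⟩
  · intro x; fin_cases x <;> simpa
  · intro x; fin_cases x <;> simpa
  · simp only [sideA, Finset.mem_filter, Finset.mem_univ, true_and]
    exact ⟨⟨_, hkm⟩, hi, h1, h2⟩
  · simp only [sideB, Finset.mem_filter, Finset.mem_univ, true_and]
    exact ⟨⟨_, hjm⟩, hl, h1', h2'⟩

lemma sideA_inj {t c d : ℕ × ℕ × ℕ} {v : Fin n} (h : v ∈ sideA G t c) (h' : v ∈ sideA G t d) :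
    c = d := by
  obtain ⟨c0, c1, c2⟩ := c
  obtain ⟨d0, d1, d2⟩ := d
  simp only [sideA, Finset.mem_filter, Finset.mem_univ, true_and] at h h'
  obtain ⟨-, h1, h2, h3⟩ := h
  obtain ⟨-, h1', h2', h3'⟩ := h'
  obtain rfl : c0 = d0 := by omega
  simp only [Prod.mk.injEq, true_and]
  omega

lemma sideB_inj {t c d : ℕ × ℕ × ℕ} {v : Fin n} (h : v ∈ sideB G t c) (h' : v ∈ sideB G t d) :
    c = d := by
  obtain ⟨c0, c1, c2⟩ := c
  obtain ⟨d0, d1, d2⟩ := d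
  simp only [sideB, Finset.mem_filter, Finset.mem_univ, true_and] at h h'
  obtain ⟨-, h1, h2, h3⟩ := h
  obtain ⟨-, h1', h2', h3'⟩ := h'
  obtain rfl : c0 = d0 := by omega
  simp only [Prod.mk.injEq, true_and]
  omega

end Construction

/-- If for each `t` the sets `S (t, c)` are pairwise disjoint, the total size is at most
`n` per value of `t`. -/
lemma sum_card_le {n : ℕ} {T D : Type*} [Fintype T] [Fintype D]
    (S : T × D → Finset (Fin n))
    (hS : ∀ t c d v, v ∈ S (t, c) → v ∈ S (t, d) → c = d) :
    ∑ p, (S p).card ≤ Fintype.card T * n := by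
  classical
  rw [Fintype.sum_prod_type]
  have key : ∀ t ∈ (Finset.univ : Finset T), ∑ c, (S (t, c)).card ≤ n := by
    intro t _
    rw [← Finset.card_biUnion]
    · exact (Finset.card_le_univ _).trans (by simp)
    · intro c _ d _ hcd
      exact Finset.disjoint_left.mpr fun v h h' => hcd (hS t c d v h h')
  simpa using Finset.sum_le_card_nsmul _ _ _ key

/-- Every capped graph on `n` vertices admits a biclique cover of size
`O(n (log₂ n)³)`. -/
theorem stmt_9 :
    ∃ C : ℝ, 0 < C ∧ ∀ n : ℕ, 2 ≤ n → ∀ G : SimpleGraph (Fin n),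
      (∀ i j k l : Fin n, i < j → j < k → k < l →
        G.Adj i k → G.Adj j l → G.Adj i l) →
      ∃ (m : ℕ) (A B : Fin m → Finset (Fin n)),
        IsBicliqueCover G A B ∧
        (coverSize A B : ℝ) ≤ C * (n : ℝ) * (Real.logb 2 n) ^ 3 := by
  refine ⟨16, by norm_num, fun n hn G hG => ?_⟩
  obtain ⟨K, hKdef⟩ : ∃ K, K = Nat.log 2 n + 1 := ⟨_, rfl⟩
  have hK : n < 2 ^ K := hKdef ▸ Nat.lt_pow_succ_log_self (by norm_num) n
  let I := (Fin 3 → Fin K) × (Fin 3 → Fin (2 ^ K))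
  let vals {N : ℕ} (f : Fin 3 → Fin N) : ℕ × ℕ × ℕ := (f 0, f 1, f 2)
  have vals_inj {N : ℕ} (f g : Fin 3 → Fin N) (h : vals f = vals g) : f = g := by
    simp only [vals, Prod.mk.injEq, Fin.val_inj] at h
    funext x
    fin_cases x
    exacts [h.1, h.2.1, h.2.2]
  let SA : I → Finset (Fin n) := fun p => sideA G (vals p.1) (vals p.2)
  let SB : I → Finset (Fin n) := fun p => sideB G (vals p.1) (vals p.2)
  have hcov : ∀ u v : Fin n, u < v → G.Adj u v → ∃ p : I, u ∈ SA p ∧ v ∈ SB p := by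
    intro u v huv h
    obtain ⟨t, c, ht, hc, h1, h2⟩ := exists_mem G hK huv h
    exact ⟨(fun x => ⟨t x, ht x⟩, fun x => ⟨c x, hc x⟩), h1, h2⟩
  let e := Fintype.equivFin I
  refine ⟨Fintype.card I, SA ∘ e.symm, SB ∘ e.symm, ⟨?_, ?_, ?_⟩, ?_⟩
  · intro i
    rw [Finset.disjoint_left]
    exact fun v h h' => G.irrefl (adj_of_mem G hG h h')
  · exact fun i a ha b hb => adj_of_mem G hG ha hb
  · intro u v h
    rcases lt_or_gt_of_ne h.ne with huv | huv
    · obtain ⟨p, h1, h2⟩ := hcov u v huv h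
      exact ⟨e p, Or.inl (by simpa using ⟨h1, h2⟩)⟩
    · obtain ⟨p, h1, h2⟩ := hcov v u huv h.symm
      exact ⟨e p, Or.inr (by simpa using ⟨h1, h2⟩)⟩
  · have hA : ∑ p, (SA p).card ≤ K ^ 3 * n := by
      simpa using sum_card_le SA fun t c d v h h' => vals_inj _ _ (sideA_inj G h h')
    have hB : ∑ p, (SB p).card ≤ K ^ 3 * n := by
      simpa using sum_card_le SB fun t c d v h h' => vals_inj _ _ (sideB_inj G h h')
    have hsize : coverSize (SA ∘ e.symm) (SB ∘ e.symm) ≤ 2 * (K ^ 3 * n) := by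
      have : coverSize (SA ∘ e.symm) (SB ∘ e.symm) = ∑ p, ((SA p).card + (SB p).card) :=
        Equiv.sum_comp e.symm fun p => (SA p).card + (SB p).card
      rw [this, Finset.sum_add_distrib]
      omega
    have hn' : (2 : ℝ) ≤ n := by exact_mod_cast hn
    have hlog1 : 1 ≤ Real.logb 2 n := by
      rw [Real.le_logb_iff_rpow_le (by norm_num) (by linarith)]
      simpa using hn'
    have hlog2 : (Nat.log 2 n : ℝ) ≤ Real.logb 2 n := by
      simpa using Real.natLog_le_logb n 2
    have hKlog : (K : ℝ) ≤ 2 * Real.logb 2 n := by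
      rw [hKdef]; push_cast; linarith
    calc (coverSize (SA ∘ e.symm) (SB ∘ e.symm) : ℝ)
        ≤ 2 * ((K : ℝ) ^ 3 * n) := by exact_mod_cast hsize
      _ ≤ 2 * ((2 * Real.logb 2 n) ^ 3 * n) := by gcongr
      _ = 16 * n * Real.logb 2 n ^ 3 := by ring
end

section
/- There exists a constant C > 0 such that for all n ≥ 2, the intersection graph of any family of n grounded L-shapes in the plane admits a biclique cover of size at most C · n · (log₂ n)³. -/
/-- The L-shape with corner `(a, b)`, height `h` and width `w`. -/
def LShape (a b h w : ℝ) : Set (ℝ × ℝ) :=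
  ({a} ×ˢ Set.Icc b (b + h)) ∪ (Set.Icc a (a + w) ×ˢ {b})

/-- The highest bit `j` at which `s < t` differ, with the common prefix `c` above it. -/
lemma exists_level (k : ℕ) : ∀ s t : ℕ, s < t → t < 2 ^ k →
    ∃ j < k, ∃ c < 2 ^ k, s / 2 ^ j = 2 * c ∧ t / 2 ^ j = 2 * c + 1 := by
  induction k with
  | zero => intro s t h1 h2; simp at h2; omega
  | succ k ih =>
    intro s t h1 h2
    rw [pow_succ] at h2
    by_cases h : s / 2 = t / 2
    · exact ⟨0, by omega, s / 2, by rw [pow_succ]; omega, by simp; omega, by simp; omega⟩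
    · obtain ⟨j, hj, c, hc, e1, e2⟩ := ih (s / 2) (t / 2) (by omega) (by omega)
      refine ⟨j + 1, by omega, c, by rw [pow_succ]; omega, ?_, ?_⟩
      · rw [pow_succ', ← Nat.div_div_eq_div_mul, e1]
      · rw [pow_succ', ← Nat.div_div_eq_div_mul, e2]

/-- The vertices `u` whose vector `fun i => z i u`, truncated at the levels `j`, equals `t`. -/
def truncClass {n d : ℕ} (z : Fin d → Fin n → ℕ) (j t : Fin d → ℕ) : Finset (Fin n) :=
  Finset.univ.filter fun u => ∀ i, z i u / 2 ^ j i = t i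

/-- For fixed levels, the classes belonging to different truncations are disjoint. -/
lemma sum_card_truncClass_le {n d : ℕ} {γ : Type*} [Fintype γ] (z : Fin d → Fin n → ℕ)
    (j : Fin d → ℕ) (t : γ → Fin d → ℕ) (ht : Function.Injective t) :
    ∑ c, (truncClass z j (t c)).card ≤ n := by
  classical
  rw [← Finset.card_biUnion]
  · exact (Finset.card_le_univ _).trans (by simp)
  · intro c _ c' _ hcc
    rw [Function.onFun, Finset.disjoint_left]
    intro u hu hv
    simp only [truncClass, Finset.mem_filter, Finset.mem_univ, true_and] at hu hv
    refine hcc (ht (funext fun i => ?_))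
    rw [← hu i, ← hv i]

/-- A graph whose edges are given by `d`-dimensional strict dominance between `k`-bit vectors has a
biclique cover of size at most `2 * n * k ^ d`. -/
lemma exists_cover_of_dominance {n d k : ℕ} (G : SimpleGraph (Fin n)) (x y : Fin d → Fin n → ℕ)
    (hy : ∀ i v, y i v < 2 ^ k)
    (h1 : ∀ u v, (∀ i, x i u < y i v) → G.Adj u v)
    (h2 : ∀ u v, G.Adj u v → (∀ i, x i u < y i v) ∨ (∀ i, x i v < y i u)) :
    ∃ (m : ℕ) (A B : Fin m → Finset (Fin n)),
      IsBicliqueCover G A B ∧ coverSize A B ≤ 2 * n * k ^ d := by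
  classical
  -- a biclique is given by a level and a prefix for each coordinate
  let I := (Fin d → Fin k) × (Fin d → Fin (2 ^ k))
  let A : I → Finset (Fin n) := fun p => truncClass x (fun i => p.1 i) (fun i => 2 * p.2 i)
  let B : I → Finset (Fin n) := fun p => truncClass y (fun i => p.1 i) (fun i => 2 * p.2 i + 1)
  have hadj : ∀ p, ∀ u ∈ A p, ∀ v ∈ B p, G.Adj u v := by
    intro p u hu v hv
    simp only [A, B, truncClass, Finset.mem_filter, Finset.mem_univ, true_and] at hu hv
    refine h1 u v fun i => ?_
    by_contra hlt
    have := Nat.div_le_div_right (c := 2 ^ (p.1 i : ℕ)) (not_lt.mp hlt)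
    have := hu i
    have := hv i
    omega
  have hcov : ∀ u v, (∀ i, x i u < y i v) → ∃ p, u ∈ A p ∧ v ∈ B p := by
    intro u v huv
    choose j hj c hc e1 e2 using fun i => exists_level k (x i u) (y i v) (huv i) (hy i v)
    refine ⟨(fun i => ⟨j i, hj i⟩, fun i => ⟨c i, hc i⟩), ?_, ?_⟩
    · simpa [A, truncClass] using e1
    · simpa [B, truncClass] using e2
  let e := (Fintype.equivFin I).symm
  refine ⟨Fintype.card I, A ∘ e, B ∘ e, ⟨?_, fun i => hadj (e i), ?_⟩, ?_⟩
  · intro i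
    rw [Finset.disjoint_left]
    intro u hu hu'
    exact (hadj (e i) u hu u hu').ne rfl
  · intro u v huv
    rcases h2 u v huv with h | h
    · obtain ⟨p, hp⟩ := hcov u v h
      exact ⟨e.symm p, Or.inl (by simpa using hp)⟩
    · obtain ⟨p, hp⟩ := hcov v u h
      exact ⟨e.symm p, Or.inr (by simpa using hp)⟩
  · have hs : coverSize (A ∘ e) (B ∘ e) = ∑ p, ((A p).card + (B p).card) :=
      Equiv.sum_comp e fun p => (A p).card + (B p).card
    rw [hs, Fintype.sum_prod_type]
    have hj : ∀ j : Fin d → Fin k, ∑ c, ((A (j, c)).card + (B (j, c)).card) ≤ 2 * n := by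
      intro j
      rw [Finset.sum_add_distrib]
      have hA := sum_card_truncClass_le x (fun i => j i)
        (fun (c : Fin d → Fin (2 ^ k)) i => 2 * (c i : ℕ))
        (fun c c' h => funext fun i => Fin.ext (by have := congrFun h i; simp at this; omega))
      have hB := sum_card_truncClass_le y (fun i => j i)
        (fun (c : Fin d → Fin (2 ^ k)) i => 2 * (c i : ℕ) + 1)
        (fun c c' h => funext fun i => Fin.ext (by have := congrFun h i; simp at this; omega))
      simp only [A, B]
      omega
    refine (Finset.sum_le_sum fun j _ => hj j).trans (le_of_eq ?_)
    simp [mul_comm]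

lemma exists_rank_le {n : ℕ} (f g : Fin n → ℝ) :
    ∃ x y : Fin n → ℕ, (∀ v, y v ≤ n) ∧ ∀ u v, x u < y v ↔ f u ≤ g v := by
  refine ⟨fun u => (Finset.univ.filter fun w => f w < f u).card,
    fun v => (Finset.univ.filter fun w => f w ≤ g v).card,
    fun v => (Finset.card_le_univ _).trans (by simp), fun u v => ⟨fun h => ?_, fun h => ?_⟩⟩
  · by_contra hlt
    refine absurd h (not_lt.mpr (Finset.card_le_card fun w => ?_))
    simp only [Finset.mem_filter, Finset.mem_univ, true_and]
    intro hw
    linarith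
  · refine Finset.card_lt_card (Finset.ssubset_iff_of_subset (fun w => ?_) |>.mpr ⟨u, ?_, ?_⟩)
    · simp only [Finset.mem_filter, Finset.mem_univ, true_and]
      intro hw
      linarith
    · simpa using h
    · simp

lemma exists_rank_lt {n : ℕ} (f g : Fin n → ℝ) :
    ∃ x y : Fin n → ℕ, (∀ v, y v ≤ n) ∧ ∀ u v, x u < y v ↔ f u < g v := by
  refine ⟨fun u => (Finset.univ.filter fun w => f w < f u).card,
    fun v => (Finset.univ.filter fun w => f w < g v).card,
    fun v => (Finset.card_le_univ _).trans (by simp), fun u v => ⟨fun h => ?_, fun h => ?_⟩⟩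
  · by_contra hlt
    refine absurd h (not_lt.mpr (Finset.card_le_card fun w => ?_))
    simp only [Finset.mem_filter, Finset.mem_univ, true_and]
    intro hw
    linarith
  · refine Finset.card_lt_card (Finset.ssubset_iff_of_subset (fun w => ?_) |>.mpr ⟨u, ?_, ?_⟩)
    · simp only [Finset.mem_filter, Finset.mem_univ, true_and]
      intro hw
      linarith
    · simpa using h
    · simp

/-- If the corner of the first shape is to the left of and above that of the second, the shapes can
meet only at `(a', b)`. -/
lemma lShape_inter_iff {a b h w a' b' h' w' : ℝ} (ha : a < a') (hb : b' < b) :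
    (LShape a b h w ∩ LShape a' b' h' w').Nonempty ↔ a' ≤ a + w ∧ b ≤ b' + h' := by
  constructor
  · rintro ⟨⟨p, q⟩, hp, hq⟩
    simp only [LShape, Set.mem_union, Set.mem_prod, Set.mem_singleton_iff, Set.mem_Icc] at hp hq
    rcases hp with ⟨rfl, h1, h2⟩ | ⟨⟨h1, h2⟩, rfl⟩ <;>
      rcases hq with ⟨h3, h4, h5⟩ | ⟨⟨h3, h4⟩, h5⟩ <;>
      constructor <;> linarith
  · rintro ⟨h1, h2⟩
    exact ⟨(a', b), Or.inr ⟨⟨ha.le, h1⟩, rfl⟩, Or.inl ⟨rfl, hb.le, h2⟩⟩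

/-- Intersection graphs of grounded L-shapes admit biclique covers of size
`O(n (log₂ n)³)`. -/
theorem stmt_10 :
    ∃ C : ℝ, 0 < C ∧ ∀ n : ℕ, 2 ≤ n →
      ∀ (a b h w : Fin n → ℝ), (∀ v, 0 ≤ h v) → (∀ v, 0 ≤ w v) →
      (∃ α β : ℝ, α < 0 ∧ ∀ v, b v = α * a v + β) →
      (Function.Injective fun v => (a v, b v)) →
      ∀ G : SimpleGraph (Fin n),
      (∀ u v, G.Adj u v ↔ u ≠ v ∧
        (LShape (a u) (b u) (h u) (w u) ∩ LShape (a v) (b v) (h v) (w v)).Nonempty) →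
      ∃ (m : ℕ) (A B : Fin m → Finset (Fin n)),
        IsBicliqueCover G A B ∧
        (coverSize A B : ℝ) ≤ C * (n : ℝ) * (Real.logb 2 n) ^ 3 := by
  refine ⟨16, by norm_num, ?_⟩
  rintro n hn a b h w - - ⟨α, β, hα, hb⟩ hinj G hG
  have hainj : ∀ u v, a u = a v → u = v := fun u v huv =>
    hinj (by simp only [hb, huv])
  have hlt : ∀ u v, a u < a v → b v < b u := by
    intro u v huv
    rw [hb, hb]
    nlinarith
  have hiff : ∀ u v, a u < a v → (G.Adj u v ↔ a v ≤ a u + w u ∧ b u ≤ b v + h v) := by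
    intro u v huv
    rw [hG, lShape_inter_iff huv (hlt u v huv)]
    exact ⟨fun H => H.2, fun H => ⟨fun e => huv.ne (congrArg a e), H⟩⟩
  obtain ⟨x₀, y₀, hy₀, r₀⟩ := exists_rank_lt a a
  -- negation puts the number attached to the left vertex on the smaller side of the comparison
  obtain ⟨x₁, y₁, hy₁, r₁⟩ := exists_rank_le (fun u => -(a u + w u)) (fun v => -a v)
  obtain ⟨x₂, y₂, hy₂, r₂⟩ := exists_rank_le b (fun v => b v + h v)
  have hdom : ∀ u v, (∀ i, (![x₀, x₁, x₂] : Fin 3 → Fin n → ℕ) i u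
      < (![y₀, y₁, y₂] : Fin 3 → Fin n → ℕ) i v) ↔
      a u < a v ∧ a v ≤ a u + w u ∧ b u ≤ b v + h v := by
    intro u v
    simp [Fin.forall_fin_succ, r₀, r₁, r₂, -neg_add_rev]
  have hnk : n < 2 ^ (Nat.log 2 n + 1) := Nat.lt_pow_succ_log_self (by norm_num) n
  obtain ⟨m, A, B, hAB, hsize⟩ := exists_cover_of_dominance (k := Nat.log 2 n + 1) G
    ![x₀, x₁, x₂] ![y₀, y₁, y₂]
    (by
      intro i v
      refine lt_of_le_of_lt ?_ hnk
      fin_cases i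
      · exact hy₀ v
      · exact hy₁ v
      · exact hy₂ v)
    (fun u v H => by
      obtain ⟨h0, H⟩ := (hdom u v).1 H
      exact (hiff u v h0).2 H)
    (fun u v H => by
      rw [hdom, hdom]
      rcases lt_trichotomy (a u) (a v) with hl | he | hl
      · exact Or.inl ⟨hl, (hiff u v hl).1 H⟩
      · exact absurd (hainj u v he) H.ne
      · exact Or.inr ⟨hl, (hiff v u hl).1 H.symm⟩)
  refine ⟨m, A, B, hAB, ?_⟩
  have hn' : (2 : ℝ) ≤ n := by exact_mod_cast hn
  have hlog1 : 1 ≤ Real.logb 2 n := by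
    rw [Real.le_logb_iff_rpow_le (by norm_num) (by linarith)]
    simpa using hn'
  have hlog2 : (Nat.log 2 n : ℝ) ≤ Real.logb 2 n := by
    exact_mod_cast Real.natLog_le_logb n 2
  have hk : ((Nat.log 2 n : ℝ) + 1) ^ 3 ≤ (2 * Real.logb 2 n) ^ 3 := by
    gcongr
    linarith
  calc (coverSize A B : ℝ) ≤ 2 * n * ((Nat.log 2 n : ℝ) + 1) ^ 3 := by exact_mod_cast hsize
    _ ≤ 2 * n * (2 * Real.logb 2 n) ^ 3 := by gcongr
    _ = 16 * n * Real.logb 2 n ^ 3 := by ring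
end

section
/- There exists a constant C > 0 such that for all n ≥ 2, every grid intersection graph on n vertices admits a biclique cover of size at most C · n · (log₂ n)⁴. -/
/-- `2 * q` and `2 * q + 1` are the numbers with binary prefix `q` followed by the digit `0`,
resp. `1`; so `j` is the highest position at which `a` and `b` differ. -/
lemma lt_iff_exists_level (k a b : ℕ) (hb : b < 2 ^ k) :
    a < b ↔ ∃ j : Fin k, ∃ q : Fin (2 ^ k),
      a / 2 ^ (j : ℕ) = 2 * q ∧ b / 2 ^ (j : ℕ) = 2 * q + 1 := by
  constructor
  · intro h
    suffices H : ∃ j < k, ∃ q : ℕ, a / 2 ^ j = 2 * q ∧ b / 2 ^ j = 2 * q + 1 by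
      obtain ⟨j, hj, q, h1, h2⟩ := H
      have : b / 2 ^ j ≤ b := Nat.div_le_self _ _
      exact ⟨⟨j, hj⟩, ⟨q, by omega⟩, h1, h2⟩
    induction k generalizing a b with
    | zero => simp at hb; omega
    | succ k ih =>
      by_cases h2 : a / 2 < b / 2
      · obtain ⟨j, hj, q, h3, h4⟩ := ih (a / 2) (b / 2) (by rw [pow_succ] at hb; omega) h2
        refine ⟨j + 1, by omega, q, ?_, ?_⟩
        · rw [pow_succ', ← Nat.div_div_eq_div_mul, h3]
        · rw [pow_succ', ← Nat.div_div_eq_div_mul, h4]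
      · exact ⟨0, by omega, a / 2, by simp; omega, by simp; omega⟩
  · rintro ⟨j, q, h1, h2⟩
    by_contra h
    have := Nat.div_le_div_right (c := 2 ^ (j : ℕ)) (not_lt.mp h)
    omega

/-- Order comparisons `F u ≤ G v` on `n` points become strict comparisons of ranks in `{0, …, n}`. -/
lemma exists_rank_s12 {n : ℕ} (F G : Fin n → ℝ) :
    ∃ f g : Fin n → ℕ, (∀ v, g v ≤ n) ∧ ∀ u v, F u ≤ G v ↔ f u < g v := by
  classical
  refine ⟨fun u => (Finset.univ.filter fun w => F w < F u).card,
    fun v => (Finset.univ.filter fun w => F w ≤ G v).card, fun v => ?_,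
    fun u v => ⟨fun h => ?_, fun h => ?_⟩⟩
  · simpa using Finset.card_le_univ (Finset.univ.filter fun w => F w ≤ G v)
  · apply Finset.card_lt_card
    rw [Finset.ssubset_iff_of_subset]
    · exact ⟨u, by simpa using h, by simp⟩
    · intro w hw
      simp only [Finset.mem_filter, Finset.mem_univ, true_and] at hw ⊢
      linarith
  · by_contra h'
    refine absurd h (not_lt.mpr (Finset.card_le_card ?_))
    intro w hw
    simp only [Finset.mem_filter, Finset.mem_univ, true_and] at hw ⊢
    linarith

/-- The relation `hor u ∧ ¬ hor v ∧ ∀ p, f p u < g p v` is a union of products `A i × B i` of total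
size at most `n * k ^ 4`: each vertex occurs at most once for every choice of the four levels. -/
lemma exists_biclique_family {n k : ℕ} (hor : Fin n → Bool) (f g : Fin 4 → Fin n → ℕ)
    (hg : ∀ p v, g p v < 2 ^ k) :
    ∃ (m : ℕ) (A B : Fin m → Finset (Fin n)),
      (∀ u v, (hor u = true ∧ hor v = false ∧ ∀ p, f p u < g p v) ↔ ∃ i, u ∈ A i ∧ v ∈ B i) ∧
      (∀ i, ∀ u ∈ A i, hor u = true) ∧ (∀ i, ∀ v ∈ B i, hor v = false) ∧
      coverSize A B ≤ n * k ^ 4 := by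
  classical
  let ι := (Fin 4 → Fin k) × (Fin 4 → Fin (2 ^ k))
  let A : ι → Finset (Fin n) := fun i =>
    Finset.univ.filter fun u => hor u = true ∧ ∀ p, f p u / 2 ^ (i.1 p : ℕ) = 2 * i.2 p
  let B : ι → Finset (Fin n) := fun i =>
    Finset.univ.filter fun v => hor v = false ∧ ∀ p, g p v / 2 ^ (i.1 p : ℕ) = 2 * i.2 p + 1
  let e := (Fintype.equivFin ι).symm
  refine ⟨Fintype.card ι, fun i => A (e i), fun i => B (e i), fun u v => ?_, ?_, ?_, ?_⟩
  · constructor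
    · rintro ⟨hu, hv, h⟩
      have h' := fun p => (lt_iff_exists_level k _ _ (hg p v)).mp (h p)
      choose j q h1 h2 using h'
      refine ⟨e.symm (j, q), ?_, ?_⟩
      · simp [A, hu, h1]
      · simp [B, hv, h2]
    · rintro ⟨i, hu, hv⟩
      simp only [A, B, Finset.mem_filter, Finset.mem_univ, true_and] at hu hv
      exact ⟨hu.1, hv.1, fun p => (lt_iff_exists_level k _ _ (hg p v)).mpr
        ⟨_, _, hu.2 p, hv.2 p⟩⟩
  · intro i u hu
    exact (Finset.mem_filter.mp hu).2.1
  · intro i u hu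
    exact (Finset.mem_filter.mp hu).2.1
  · have h1 : coverSize (fun i => A (e i)) (fun i => B (e i))
        = ∑ i : ι, ((A i).card + (B i).card) :=
      Equiv.sum_comp e (fun i => (A i).card + (B i).card)
    have hdisj : ∀ i, Disjoint (A i) (B i) := by
      intro i
      rw [Finset.disjoint_left]
      intro u hu hv
      have h1 := (Finset.mem_filter.mp hu).2.1
      have h2 := (Finset.mem_filter.mp hv).2.1
      simp_all
    have h2 : ∑ i : ι, ((A i).card + (B i).card)
        = ∑ j : Fin 4 → Fin k, ∑ q : Fin 4 → Fin (2 ^ k), (A (j, q) ∪ B (j, q)).card := by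
      rw [Fintype.sum_prod_type]
      simp_rw [Finset.card_union_of_disjoint (hdisj _)]
    -- With the levels fixed, the classes of distinct prefix tuples are disjoint.
    have h3 : ∀ j : Fin 4 → Fin k,
        ∑ q : Fin 4 → Fin (2 ^ k), (A (j, q) ∪ B (j, q)).card ≤ n := by
      intro j
      rw [← Finset.card_biUnion]
      · simpa using Finset.card_le_univ
          (Finset.univ.biUnion fun q : Fin 4 → Fin (2 ^ k) => A (j, q) ∪ B (j, q))
      · intro q _ q' _ hne
        rw [Function.onFun, Finset.disjoint_left]
        intro w hw hw'
        apply hne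
        funext p
        apply Fin.ext
        simp only [A, B, Finset.mem_union, Finset.mem_filter, Finset.mem_univ, true_and] at hw hw'
        rcases hw with ⟨a, h⟩ | ⟨a, h⟩ <;> rcases hw' with ⟨a', h'⟩ | ⟨a', h'⟩
        · have := h p; have := h' p; omega
        · simp_all
        · simp_all
        · have := h p; have := h' p; omega
    rw [h1, h2]
    calc _ ≤ ∑ j : Fin 4 → Fin k, n := Finset.sum_le_sum fun j _ => h3 j
      _ = n * k ^ 4 := by simp [mul_comm]

/-- Every grid intersection graph on `n` vertices admits a biclique cover of
size `O(n (log₂ n)⁴)`. -/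
theorem stmt_12 :
    ∃ C : ℝ, 0 < C ∧ ∀ n : ℕ, 2 ≤ n →
      ∀ (seg : Fin n → Set (ℝ × ℝ)) (hor : Fin n → Bool),
      (∀ v, hor v = true →
        ∃ x₁ x₂ y : ℝ, x₁ ≤ x₂ ∧ seg v = Set.Icc x₁ x₂ ×ˢ {y}) →
      (∀ v, hor v = false →
        ∃ x y₁ y₂ : ℝ, y₁ ≤ y₂ ∧ seg v = {x} ×ˢ Set.Icc y₁ y₂) →
      (∀ u v, u ≠ v → hor u = hor v → seg u ∩ seg v = ∅) →
      ∀ G : SimpleGraph (Fin n),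
      (∀ u v, G.Adj u v ↔ u ≠ v ∧ (seg u ∩ seg v).Nonempty) →
      ∃ (m : ℕ) (A B : Fin m → Finset (Fin n)),
        IsBicliqueCover G A B ∧
        (coverSize A B : ℝ) ≤ C * (n : ℝ) * (Real.logb 2 n) ^ 4 := by
  refine ⟨16, by norm_num, ?_⟩
  intro n hn seg hor hH hV hdis G hG
  have hH' : ∀ v, ∃ x₁ x₂ y : ℝ, hor v = true → seg v = Set.Icc x₁ x₂ ×ˢ {y} := by
    intro v
    by_cases h : hor v = true
    · obtain ⟨a, b, c, -, e⟩ := hH v h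
      exact ⟨a, b, c, fun _ => e⟩
    · exact ⟨0, 0, 0, fun h' => absurd h' h⟩
  have hV' : ∀ v, ∃ x y₁ y₂ : ℝ, hor v = false → seg v = {x} ×ˢ Set.Icc y₁ y₂ := by
    intro v
    by_cases h : hor v = false
    · obtain ⟨a, b, c, -, e⟩ := hV v h
      exact ⟨a, b, c, fun _ => e⟩
    · exact ⟨0, 0, 0, fun h' => absurd h' h⟩
  choose x₁ x₂ y hH'' using hH'
  choose x y₁ y₂ hV'' using hV'
  let F₀ : Fin 4 → Fin n → ℝ := ![x₁, fun u => -x₂ u, fun u => -y u, y]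
  let G₀ : Fin 4 → Fin n → ℝ := ![x, fun v => -x v, fun v => -y₁ v, y₂]
  choose f g hgn hfg using fun p => exists_rank_s12 (F₀ p) (G₀ p)
  have key : ∀ u v, hor u = true → hor v = false →
      ((seg u ∩ seg v).Nonempty ↔ ∀ p, f p u < g p v) := by
    intro u v hu hv
    rw [hH'' u hu, hV'' v hv]
    simp only [← hfg, Fin.forall_fin_succ, F₀, G₀]
    simp only [Set.prod_inter_prod, Set.prod_nonempty_iff]
    constructor
    · rintro ⟨⟨a, ha, ha'⟩, ⟨b, hb, hb'⟩⟩
      simp only [Set.mem_singleton_iff, Set.mem_Icc] at ha ha' hb hb'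
      subst ha' hb
      simp [ha, hb']
    · intro h
      simp at h
      exact ⟨⟨x v, by simp [h]⟩, ⟨y u, by simp [h]⟩⟩
  set k := Nat.log 2 n + 1 with hk
  have hnk : n < 2 ^ k := Nat.lt_pow_succ_log_self (by norm_num) n
  obtain ⟨m, A, B, hcov, hA, hB, hsize⟩ :=
    exists_biclique_family hor f g (k := k) (fun p v => (hgn p v).trans_lt hnk)
  have hne : ∀ u v, hor u = true → hor v = false → u ≠ v := by
    rintro u v hu hv rfl
    simp_all
  refine ⟨m, A, B, ⟨?_, ?_, ?_⟩, ?_⟩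
  · intro i
    rw [Finset.disjoint_left]
    intro u hu hv
    exact hne u u (hA i u hu) (hB i u hv) rfl
  · intro i a ha b hb
    have h1 := hA i a ha
    have h2 := hB i b hb
    exact (hG a b).mpr ⟨hne a b h1 h2, (key a b h1 h2).mpr ((hcov a b).mpr ⟨i, ha, hb⟩).2.2⟩
  · intro u v huv
    obtain ⟨huv', hint⟩ := (hG u v).mp huv
    rcases hu : hor u <;> rcases hv : hor v
    · exact absurd (hdis u v huv' (hu.trans hv.symm)) hint.ne_empty
    · rw [Set.inter_comm] at hint
      obtain ⟨i, h⟩ := (hcov v u).mp ⟨hv, hu, (key v u hv hu).mp hint⟩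
      exact ⟨i, Or.inr h⟩
    · obtain ⟨i, h⟩ := (hcov u v).mp ⟨hu, hv, (key u v hu hv).mp hint⟩
      exact ⟨i, Or.inl h⟩
    · exact absurd (hdis u v huv' (hu.trans hv.symm)) hint.ne_empty
  · have hlog1 : (1 : ℝ) ≤ Real.logb 2 n := by
      rw [Real.le_logb_iff_rpow_le (by norm_num) (by positivity)]
      simpa using (by exact_mod_cast hn : (2 : ℝ) ≤ n)
    have hlog2 : (Nat.log 2 n : ℝ) ≤ Real.logb 2 n := Real.natLog_le_logb n 2
    have hk2 : (k : ℝ) ≤ 2 * Real.logb 2 n := by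
      rw [hk]; push_cast; linarith
    calc (coverSize A B : ℝ) ≤ (n : ℝ) * (k : ℝ) ^ 4 := by exact_mod_cast hsize
      _ ≤ (n : ℝ) * (2 * Real.logb 2 n) ^ 4 := by gcongr
      _ = 16 * (n : ℝ) * (Real.logb 2 n) ^ 4 := by ring
end

section
/- There exists a constant C > 0 such that for all n ≥ 2, the intersection graph G of any family of n nonempty closed intervals in ℝ admits a biclique cover of size at most C · n · log₂ n in which, moreover, every vertex of G belongs to A_i ∪ B_i for at most C · log₂ n indices i. -/
/-- Every point `y` of `[s, t)` lies in a dyadic block contained in `[s, t)` that is the first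
or the last block of its level with this property. -/
lemma exists_dyadic_block {s t y : ℕ} (hs : s ≤ y) (ht : y < t) :
    ∃ k, s ≤ y / 2 ^ k * 2 ^ k ∧ (y / 2 ^ k + 1) * 2 ^ k ≤ t ∧
      (y / 2 ^ k = (s + 2 ^ k - 1) / 2 ^ k ∨ y / 2 ^ k + 1 = t / 2 ^ k) := by
  classical
  have hex : ∃ k, ¬ (s ≤ y / 2 ^ k * 2 ^ k ∧ (y / 2 ^ k + 1) * 2 ^ k ≤ t) := by
    refine ⟨t, fun h => ?_⟩
    have h1 : t < 2 ^ t := Nat.lt_two_pow_self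
    have h2 := h.2
    rw [Nat.add_mul] at h2
    omega
  obtain ⟨k, hk⟩ : ∃ k, Nat.find hex = k + 1 := by
    refine Nat.exists_eq_succ_of_ne_zero fun h0 => ?_
    have h := Nat.find_spec hex
    rw [h0] at h
    simp only [pow_zero, Nat.div_one, mul_one] at h
    omega
  have hfail := Nat.find_spec hex
  rw [hk] at hfail
  have hfit := not_not.mp (Nat.find_min hex (m := k) (by omega))
  refine ⟨k, hfit.1, hfit.2, ?_⟩
  rw [pow_succ, ← Nat.div_div_eq_div_mul] at hfail
  obtain ⟨h1, h2⟩ := hfit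
  have hp : 0 < 2 ^ k := by positivity
  generalize y / 2 ^ k = q at *
  generalize 2 ^ k = p at *
  -- An even block index makes the parent block overshoot `t`, an odd one makes it start before `s`.
  rcases Nat.even_or_odd' q with ⟨c, rfl | rfl⟩
  · right
    have hc : 2 * c / 2 = c := by omega
    rw [hc] at hfail
    symm
    apply Nat.div_eq_of_lt_le
    · exact h2
    · by_contra! h
      apply hfail
      constructor <;> nlinarith
  · left
    have hc : (2 * c + 1) / 2 = c := by omega
    rw [hc] at hfail
    symm
    have h3 : c * (p * 2) < s := by
      by_contra! h
      apply hfail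
      constructor <;> nlinarith
    apply Nat.div_eq_of_lt_le
    · have : (2 * c + 1) * p = c * (p * 2) + p := by ring
      omega
    · have : (2 * c + 1 + 1) * p = (2 * c + 1) * p + p := by ring
      omega

/-- Double counting: the size of a family of disjoint pairs is the sum of the vertex degrees. -/
lemma coverSize_le_of_degree_le {n m D : ℕ} (A B : Fin m → Finset (Fin n))
    (hd : ∀ i, Disjoint (A i) (B i))
    (hD : ∀ v, (Finset.univ.filter (fun i => v ∈ A i ∨ v ∈ B i)).card ≤ D) :
    coverSize A B ≤ n * D := by
  have h1 : ∀ i, (A i).card + (B i).card = ∑ v, if v ∈ A i ∨ v ∈ B i then 1 else 0 := by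
    intro i
    rw [← Finset.card_union_of_disjoint (hd i), ← Finset.card_filter]
    congr 1
    ext v
    simp
  unfold coverSize
  simp_rw [h1]
  rw [Finset.sum_comm]
  calc _ ≤ ∑ _v : Fin n, D := Finset.sum_le_sum fun v _ => by
        rw [← Finset.card_filter]; exact hD v
    _ = n * D := by simp

/-- The combinatorial core, for any graph in which the later neighbours of `u`, with respect to
an injective ranking `r`, are the vertices with rank in `[r u + 1, e u)`. -/
lemma exists_cover_of_ranking {n : ℕ} (G : SimpleGraph (Fin n))
    (r e : Fin n → ℕ) (hr : Function.Injective r) (hrn : ∀ v, r v < n) (he : ∀ v, e v ≤ n)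
    (hG : ∀ u v, r u < r v → (G.Adj u v ↔ r v < e u)) :
    ∃ (m : ℕ) (A B : Fin m → Finset (Fin n)), IsBicliqueCover G A B ∧
      ∀ v, (Finset.univ.filter (fun i => v ∈ A i ∨ v ∈ B i)).card ≤ 3 * (Nat.log 2 n + 1) := by
  classical
  let ι := Fin (Nat.log 2 n + 1) × Fin n
  let ε : Fin (Fintype.card ι) ≃ ι := (Fintype.equivFin ι).symm
  let A' : ι → Finset (Fin n) := fun x => Finset.univ.filter fun u =>
    r u + 1 ≤ x.2 * 2 ^ (x.1 : ℕ) ∧ (x.2 + 1) * 2 ^ (x.1 : ℕ) ≤ e u ∧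
      ((x.2 : ℕ) = (r u + 1 + 2 ^ (x.1 : ℕ) - 1) / 2 ^ (x.1 : ℕ) ∨
        (x.2 : ℕ) + 1 = e u / 2 ^ (x.1 : ℕ))
  let B' : ι → Finset (Fin n) := fun x => Finset.univ.filter fun v =>
    r v / 2 ^ (x.1 : ℕ) = x.2
  have key : ∀ x, ∀ a ∈ A' x, ∀ b ∈ B' x, r a < r b ∧ r b < e a := by
    intro x a ha b hb
    simp only [A', B', Finset.mem_filter, Finset.mem_univ, true_and] at ha hb
    obtain ⟨h1, h2, -⟩ := ha
    have hp : 0 < 2 ^ (x.1 : ℕ) := by positivity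
    have h3 := Nat.div_mul_le_self (r b) (2 ^ (x.1 : ℕ))
    have h4 := Nat.lt_div_mul_add (a := r b) hp
    rw [hb] at h3 h4
    rw [Nat.add_mul] at h2
    omega
  have cov : ∀ u v, G.Adj u v → r u < r v → ∃ x, u ∈ A' x ∧ v ∈ B' x := by
    intro u v huv hlt
    obtain ⟨k, h1, h2, h3⟩ := exists_dyadic_block (s := r u + 1) hlt ((hG u v hlt).1 huv)
    have hp : 0 < 2 ^ k := by positivity
    have hpn : 2 ^ k ≤ n := by
      have := he u
      rw [Nat.add_mul] at h2
      omega
    have hk : k < Nat.log 2 n + 1 :=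
      Nat.lt_succ_of_le (Nat.le_log_of_pow_le one_lt_two hpn)
    have hj : r v / 2 ^ k < n := lt_of_le_of_lt (Nat.div_le_self _ _) (hrn v)
    refine ⟨(⟨k, hk⟩, ⟨_, hj⟩), ?_, ?_⟩
    · simp only [A', Finset.mem_filter, Finset.mem_univ, true_and]
      exact ⟨h1, h2, h3⟩
    · simp [B']
  refine ⟨Fintype.card ι, A' ∘ ε, B' ∘ ε, ⟨?_, ?_, ?_⟩, ?_⟩
  · intro i
    rw [Finset.disjoint_left]
    intro a ha hb
    exact lt_irrefl _ (key _ a ha a hb).1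
  · intro i a ha b hb
    obtain ⟨h1, h2⟩ := key _ a ha b hb
    exact (hG a b h1).2 h2
  · intro u v huv
    rcases lt_trichotomy (r u) (r v) with h | h | h
    · obtain ⟨x, hx⟩ := cov u v huv h
      exact ⟨ε.symm x, Or.inl (by simpa using hx)⟩
    · exact absurd (hr h) huv.ne
    · obtain ⟨x, hx⟩ := cov v u huv.symm h
      exact ⟨ε.symm x, Or.inr (by simpa using hx)⟩
  · intro v
    -- On level `k` the block index takes one of three values: twice via `A'`, once via `B'`.
    let c : ℕ → Finset ℕ := fun k =>
      {(r v + 1 + 2 ^ k - 1) / 2 ^ k, e v / 2 ^ k - 1, r v / 2 ^ k}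
    have hc : ∀ k, (c k).card ≤ 3 := fun k => Finset.card_le_three
    calc _ ≤ ((Finset.range (Nat.log 2 n + 1)).sigma c).card := by
          refine Finset.card_le_card_of_injOn
            (fun i => (⟨((ε i).1 : ℕ), ((ε i).2 : ℕ)⟩ : Σ _ : ℕ, ℕ)) ?_ ?_
          · intro i hi
            simp only [Finset.coe_filter, Finset.mem_univ, true_and, Set.mem_ofPred_eq,
              Function.comp, A', B', Finset.mem_filter] at hi
            simp only [Finset.mem_coe, Finset.mem_sigma, Finset.mem_range, c,
              Finset.mem_insert, Finset.mem_singleton]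
            refine ⟨(ε i).1.2, ?_⟩
            rcases hi with ⟨-, -, h | h⟩ | h
            · exact Or.inl h
            · right; left; omega
            · right; right; exact h.symm
          · intro i _ j _ hij
            simp only [Sigma.mk.injEq, heq_eq_eq] at hij
            exact ε.injective (Prod.ext (Fin.ext hij.1) (Fin.ext hij.2))
      _ = ∑ k ∈ Finset.range (Nat.log 2 n + 1), (c k).card := Finset.card_sigma _ _
      _ ≤ ∑ _k ∈ Finset.range (Nat.log 2 n + 1), 3 := Finset.sum_le_sum fun k _ => hc k
      _ = 3 * (Nat.log 2 n + 1) := by simp [mul_comm]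

/-- Interval graphs admit biclique covers of size `O(n log₂ n)` in which every
vertex appears in `O(log₂ n)` bicliques. -/
theorem stmt_13 :
    ∃ C : ℝ, 0 < C ∧ ∀ n : ℕ, 2 ≤ n →
      ∀ (lo hi : Fin n → ℝ), (∀ v, lo v ≤ hi v) →
      ∀ G : SimpleGraph (Fin n),
      (∀ u v, G.Adj u v ↔ u ≠ v ∧
        (Set.Icc (lo u) (hi u) ∩ Set.Icc (lo v) (hi v)).Nonempty) →
      ∃ (m : ℕ) (A B : Fin m → Finset (Fin n)),
        IsBicliqueCover G A B ∧
        (coverSize A B : ℝ) ≤ C * (n : ℝ) * Real.logb 2 n ∧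
        ∀ v : Fin n,
          (((Finset.univ : Finset (Fin m)).filter
              (fun i => v ∈ A i ∨ v ∈ B i)).card : ℝ) ≤ C * Real.logb 2 n := by
  classical
  refine ⟨6, by norm_num, fun n hn lo hi hlohi G hG => ?_⟩
  let σ := Tuple.sort lo
  have hmono : Monotone (lo ∘ σ) := Tuple.monotone_sort lo
  let e : Fin n → ℕ := fun u => (Finset.univ.filter fun i => (lo ∘ σ) i ≤ hi u).card
  obtain ⟨m, A, B, hcov, hdeg⟩ := exists_cover_of_ranking G (fun v => (σ.symm v : ℕ)) e
    (fun u v h => σ.symm.injective (Fin.ext h)) (fun v => (σ.symm v).2)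
    (fun v => by simpa [e] using Finset.card_le_univ (Finset.univ.filter fun i => (lo ∘ σ) i ≤ hi v)) (by
      intro u v huv
      have hle : lo u ≤ lo v := by
        have h := hmono (le_of_lt (Fin.lt_def.2 huv))
        simpa using h
      have hev : (σ.symm v : ℕ) < e u ↔ lo v ≤ hi u := by
        have h := Tuple.lt_card_le_iff_apply_le_of_monotone (j := σ.symm v) (a := hi u) hmono
        simpa [e] using h
      rw [hev, hG]
      constructor
      · rintro ⟨-, x, hxu, hxv⟩
        exact hxv.1.trans hxu.2
      · intro h
        refine ⟨?_, lo v, ⟨hle, h⟩, le_rfl, hlohi v⟩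
        rintro rfl
        exact lt_irrefl _ huv)
  have hn1 : (1 : ℝ) ≤ Real.logb 2 n := by
    rw [Real.le_logb_iff_rpow_le one_lt_two (by positivity)]
    simpa using (by exact_mod_cast hn : (2 : ℝ) ≤ n)
  have hlog : (Nat.log 2 n : ℝ) ≤ Real.logb 2 n := by
    exact_mod_cast Real.natLog_le_logb n 2
  have hD : ((3 * (Nat.log 2 n + 1) : ℕ) : ℝ) ≤ 6 * Real.logb 2 n := by
    push_cast
    linarith
  refine ⟨m, A, B, hcov, ?_, fun v => le_trans (by exact_mod_cast hdeg v) hD⟩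
  calc (coverSize A B : ℝ) ≤ (n : ℝ) * ((3 * (Nat.log 2 n + 1) : ℕ) : ℝ) := by
        exact_mod_cast coverSize_le_of_degree_le A B hcov.1 hdeg
    _ ≤ n * (6 * Real.logb 2 n) := by gcongr
    _ = 6 * n * Real.logb 2 n := by ring
end

section
/- For every integer d ≥ 1 there exists a constant C_d > 0 such that for all n ≥ 2, the intersection graph G of any family of n nonempty axis-aligned boxes in ℝ^d admits a biclique cover of size at most C_d · n · (log₂ n)^d in which, moreover, every vertex of G belongs to A_i ∪ B_i for at most C_d · (log₂ n)^d indices i. -/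
/-! ### Bicliques from labels -/

/-- Bicliques from labels: each vertex `v` carries two label sets `X v` and `Y v`, and label `i`
defines the biclique `{v | i ∈ X v} × {v | i ∈ Y v}`. -/
lemma exists_cover_of_labels {n : ℕ} {ι : Type*} [DecidableEq ι] (G : SimpleGraph (Fin n))
    (X Y : Fin n → Finset ι) (K : ℕ)
    (hdisj : ∀ v, Disjoint (X v) (Y v))
    (hadj : ∀ u v, u ≠ v → (G.Adj u v ↔ ∃ i, i ∈ X u ∧ i ∈ Y v))
    (hX : ∀ v, (X v).card ≤ K) (hY : ∀ v, (Y v).card ≤ K) :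
    ∃ (m : ℕ) (A B : Fin m → Finset (Fin n)),
      IsBicliqueCover G A B ∧ coverSize A B ≤ n * (2 * K) ∧
      ∀ v : Fin n, ((Finset.univ : Finset (Fin m)).filter
        (fun i => v ∈ A i ∨ v ∈ B i)).card ≤ 2 * K := by
  classical
  let S : Finset ι := Finset.univ.biUnion X
  let e : Fin S.card ≃ S := S.equivFin.symm
  have hinj : Function.Injective (fun i : Fin S.card => (e i : ι)) :=
    Subtype.val_injective.comp e.injective
  have hcount : ∀ T : Finset ι,
      ((Finset.univ : Finset (Fin S.card)).filter (fun i => (e i : ι) ∈ T)).card ≤ T.card := by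
    intro T
    refine Finset.card_le_card_of_injOn (fun i => (e i : ι)) ?_ hinj.injOn
    intro i hi
    simpa using hi
  refine ⟨S.card, fun i => Finset.univ.filter (fun v => (e i : ι) ∈ X v),
    fun i => Finset.univ.filter (fun v => (e i : ι) ∈ Y v), ⟨?_, ?_, ?_⟩, ?_, ?_⟩
  · intro i
    rw [Finset.disjoint_left]
    intro v hv hv'
    simp only [Finset.mem_filter, Finset.mem_univ, true_and] at hv hv'
    exact Finset.disjoint_left.1 (hdisj v) hv hv'
  · intro i a ha b hb
    simp only [Finset.mem_filter, Finset.mem_univ, true_and] at ha hb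
    have hne : a ≠ b := by
      rintro rfl
      exact Finset.disjoint_left.1 (hdisj a) ha hb
    exact (hadj a b hne).2 ⟨_, ha, hb⟩
  · intro u v huv
    obtain ⟨i, hi, hi'⟩ := (hadj u v huv.ne).1 huv
    have hS : i ∈ S := Finset.mem_biUnion.2 ⟨u, Finset.mem_univ _, hi⟩
    refine ⟨e.symm ⟨i, hS⟩, Or.inl ?_⟩
    simp [hi, hi']
  · unfold coverSize
    -- double counting of incidences between vertices and labels
    have h1 : ∀ Z : Fin n → Finset ι, (∀ v, (Z v).card ≤ K) →
        ∑ i : Fin S.card, (Finset.univ.filter (fun v => (e i : ι) ∈ Z v)).card ≤ n * K := by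
      intro Z hZ
      have h2 := Finset.sum_card_bipartiteAbove_eq_sum_card_bipartiteBelow
        (s := (Finset.univ : Finset (Fin S.card))) (t := (Finset.univ : Finset (Fin n)))
        (fun i v => (e i : ι) ∈ Z v)
      simp only [Finset.bipartiteAbove, Finset.bipartiteBelow] at h2
      rw [h2]
      calc _ ≤ ∑ _v : Fin n, K := Finset.sum_le_sum fun v _ => (hcount (Z v)).trans (hZ v)
        _ = n * K := by simp
    rw [Finset.sum_add_distrib]
    have := h1 X hX
    have := h1 Y hY
    linarith
  · intro v
    have h := hcount (X v ∪ Y v)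
    simp only [Finset.mem_union] at h
    simp only [Finset.mem_filter, Finset.mem_univ, true_and]
    have := Finset.card_union_le (X v) (Y v)
    have := hX v
    have := hY v
    omega

/-! ### Dyadic blocks -/

/-- The dyadic blocks of level at most `log₂ n` containing `p`; the pair `(k, q)` stands for the
block `[q 2^k, (q+1) 2^k)`. -/
def pointBlocks (n p : ℕ) : Finset (ℕ × ℕ) :=
  (Finset.range (Nat.log 2 n + 1)).image (fun k => (k, p / 2 ^ k))

/-- For each level `k ≤ log₂ n`, the first and the last dyadic block of level `k` contained in the
integer interval `[a, b)`, provided they exist. The candidates are the rounded endpoints; the filter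
discards those not contained in `[a, b)`. -/
def canonicalBlocks (n a b : ℕ) : Finset (ℕ × ℕ) :=
  ((Finset.range (Nat.log 2 n + 1)).image (fun k => (k, (a + 2 ^ k - 1) / 2 ^ k)) ∪
    (Finset.range (Nat.log 2 n + 1)).image (fun k => (k, b / 2 ^ k - 1))).filter
      (fun x => a ≤ x.2 * 2 ^ x.1 ∧ (x.2 + 1) * 2 ^ x.1 ≤ b)

lemma card_pointBlocks_le (n p : ℕ) : (pointBlocks n p).card ≤ Nat.log 2 n + 1 :=
  Finset.card_image_le.trans (by simp)

lemma card_canonicalBlocks_le (n a b : ℕ) :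
    (canonicalBlocks n a b).card ≤ 2 * (Nat.log 2 n + 1) := by
  refine (Finset.card_filter_le _ _).trans ((Finset.card_union_le _ _).trans ?_)
  rw [two_mul]
  exact add_le_add (Finset.card_image_le.trans (by simp)) (Finset.card_image_le.trans (by simp))

/-- An integer lies in `[a, b)` iff one of its dyadic blocks is canonical for `[a, b)`. For the
forward direction, the largest block around `p` contained in `[a, b)` has a sibling sticking out of
`[a, b)`, hence is the first or the last contained block of its level. -/
lemma dyadic_cover {n a b p : ℕ} (hb : b ≤ n) :
    (∃ x, x ∈ pointBlocks n p ∧ x ∈ canonicalBlocks n a b) ↔ a ≤ p ∧ p < b := by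
  constructor
  · rintro ⟨x, hx, hx'⟩
    simp only [pointBlocks, Finset.mem_image] at hx
    obtain ⟨k, -, rfl⟩ := hx
    have h := (Finset.mem_filter.1 hx').2
    simp only at h
    have h1 := Nat.div_mul_le_self p (2 ^ k)
    have h2 := Nat.lt_div_mul_add (a := p) (b := 2 ^ k) (by positivity)
    constructor
    · exact h.1.trans h1
    · nlinarith [h.2]
  · rintro ⟨hap, hpb⟩
    let Q : ℕ → Prop := fun k => a ≤ p / 2 ^ k * 2 ^ k ∧ (p / 2 ^ k + 1) * 2 ^ k ≤ b
    have hQlog : ∀ k, Q k → k ≤ Nat.log 2 n := by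
      intro k hk
      refine Nat.le_log_of_pow_le (by norm_num) ?_
      have h1 : 1 * 2 ^ k ≤ (p / 2 ^ k + 1) * 2 ^ k :=
        Nat.mul_le_mul_right _ (Nat.le_add_left _ _)
      rw [one_mul] at h1
      exact h1.trans (hk.2.trans hb)
    have hex : ∃ k, ¬ Q (k + 1) := ⟨Nat.log 2 n, fun h => by have := hQlog _ h; omega⟩
    classical
    let k := Nat.find hex
    have hnot : ¬ Q (k + 1) := Nat.find_spec hex
    have hQk : Q k := by
      rcases Nat.eq_zero_or_pos k with h0 | h0
      · rw [h0]
        refine ⟨?_, ?_⟩ <;> simp <;> omega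
      · have := Nat.find_min hex (m := k - 1) (by change k - 1 < k; omega)
        rw [not_not, Nat.sub_add_cancel h0] at this
        exact this
    have hkl := hQlog k hQk
    clear_value k
    have hpos : 0 < 2 ^ k := by positivity
    refine ⟨(k, p / 2 ^ k), ?_, ?_⟩
    · exact Finset.mem_image.2 ⟨k, by simp; omega, rfl⟩
    · refine Finset.mem_filter.2 ⟨?_, hQk⟩
      simp only [Finset.mem_union, Finset.mem_image, Finset.mem_range, Prod.mk.injEq]
      obtain ⟨h1, h2⟩ := hQk
      have hparent : p / 2 ^ (k + 1) = p / 2 ^ k / 2 := by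
        rw [pow_succ, Nat.div_div_eq_div_mul]
      simp only [Q, hparent] at hnot
      rw [pow_succ] at hnot
      generalize p / 2 ^ k = q at hnot h1 h2 ⊢
      generalize ht : 2 ^ k = t at hpos hnot h1 h2
      -- the parent of block `q` is the union of the blocks `2 (q / 2)` and `2 (q / 2) + 1`
      rcases Nat.even_or_odd' q with ⟨r, hr | hr⟩
      · right
        refine ⟨k, by omega, rfl, ?_⟩
        rw [ht]
        have hr2 : q / 2 = r := by omega
        rw [hr2] at hnot
        have h3 : b < (q + 2) * t := by
          by_contra hcon
          push Not at hcon
          exact hnot ⟨by subst hr; nlinarith, by subst hr; nlinarith⟩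
        have h4 : b / t = q + 1 := by
          apply Nat.div_eq_of_lt_le
          · exact h2
          · exact h3
        omega
      · left
        refine ⟨k, by omega, rfl, ?_⟩
        rw [ht]
        have hr2 : q / 2 = r := by omega
        rw [hr2] at hnot
        have h3 : 2 * r * t < a := by
          by_contra hcon
          push Not at hcon
          exact hnot ⟨by nlinarith, by subst hr; nlinarith⟩
        apply Nat.div_eq_of_lt_le
        · subst hr
          have : (2 * r + 1) * t = 2 * r * t + t := by ring
          omega
        · have : (q + 1) * t = q * t + t := by ring
          omega

/-! ### Intervals on the line -/

/-- The rank of `v` by left endpoint, with ties broken by index. -/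
noncomputable def leftRank {n : ℕ} (lo : Fin n → ℝ) (v : Fin n) : ℕ := by
  classical
  exact (Finset.univ.filter (fun w => lo w < lo v ∨ (lo w = lo v ∧ w < v))).card

/-- The number of left endpoints not exceeding `t`. -/
noncomputable def leftCount {n : ℕ} (lo : Fin n → ℝ) (t : ℝ) : ℕ := by
  classical
  exact (Finset.univ.filter (fun w => lo w ≤ t)).card

lemma leftCount_le {n : ℕ} (lo : Fin n → ℝ) (t : ℝ) : leftCount lo t ≤ n := by
  classical
  exact (Finset.card_filter_le _ _).trans (by simp)

lemma leftRank_lt {n : ℕ} {lo : Fin n → ℝ} {u v : Fin n}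
    (h : lo u < lo v ∨ (lo u = lo v ∧ u < v)) : leftRank lo u < leftRank lo v := by
  classical
  unfold leftRank
  apply Finset.card_lt_card
  rw [Finset.ssubset_iff_of_subset]
  · exact ⟨u, by simpa using h, by simp⟩
  · intro w hw
    simp only [Finset.mem_filter, Finset.mem_univ, true_and] at hw ⊢
    rcases hw with hw | ⟨hw, hw'⟩ <;> rcases h with h | ⟨h, h'⟩
    · exact Or.inl (hw.trans h)
    · exact Or.inl (h ▸ hw)
    · exact Or.inl (hw ▸ h)
    · exact Or.inr ⟨hw.trans h, hw'.trans h'⟩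

lemma leftRank_lt_iff {n : ℕ} {lo : Fin n → ℝ} {u v : Fin n} :
    leftRank lo u < leftRank lo v ↔ lo u < lo v ∨ (lo u = lo v ∧ u < v) := by
  refine ⟨fun h => ?_, leftRank_lt⟩
  rcases lt_trichotomy (lo u) (lo v) with h1 | h1 | h1
  · exact Or.inl h1
  · rcases lt_trichotomy u v with h2 | h2 | h2
    · exact Or.inr ⟨h1, h2⟩
    · subst h2
      exact absurd h (lt_irrefl _)
    · exact absurd h (leftRank_lt (Or.inr ⟨h1.symm, h2⟩)).asymm
  · exact absurd h (leftRank_lt (Or.inl h1)).asymm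

lemma leftRank_lt_leftCount_iff {n : ℕ} {lo : Fin n → ℝ} {u : Fin n} {t : ℝ} :
    leftRank lo u < leftCount lo t ↔ lo u ≤ t := by
  classical
  unfold leftRank leftCount
  constructor
  · intro h
    by_contra hcon
    push Not at hcon
    refine absurd h (not_lt.2 (Finset.card_le_card ?_))
    intro w hw
    simp only [Finset.mem_filter, Finset.mem_univ, true_and] at hw ⊢
    exact Or.inl (hw.trans_lt hcon)
  · intro h
    apply Finset.card_lt_card
    rw [Finset.ssubset_iff_of_subset]
    · exact ⟨u, by simpa using h, by simp⟩
    · intro w hw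
      simp only [Finset.mem_filter, Finset.mem_univ, true_and] at hw ⊢
      rcases hw with hw | ⟨hw, -⟩
      · exact hw.le.trans h
      · exact hw.le.trans h

/-- Two distinct intervals meet iff the left endpoint of one, coming later in the ranking, does not
exceed the right endpoint of the other. -/
lemma interval_meet_iff {n : ℕ} {lo hi : Fin n → ℝ} (h : ∀ v, lo v ≤ hi v) {u v : Fin n}
    (huv : u ≠ v) :
    (lo u ≤ hi v ∧ lo v ≤ hi u) ↔
      (leftRank lo v + 1 ≤ leftRank lo u ∧ leftRank lo u < leftCount lo (hi v)) ∨
      (leftRank lo u + 1 ≤ leftRank lo v ∧ leftRank lo v < leftCount lo (hi u)) := by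
  simp only [Nat.succ_le_iff, leftRank_lt_iff, leftRank_lt_leftCount_iff]
  have hu := h u
  have hv := h v
  constructor
  · rintro ⟨h1, h2⟩
    rcases lt_trichotomy (lo u) (lo v) with h3 | h3 | h3
    · exact Or.inr ⟨Or.inl h3, h2⟩
    · rcases lt_or_gt_of_ne huv with h4 | h4
      · exact Or.inr ⟨Or.inr ⟨h3, h4⟩, h2⟩
      · exact Or.inl ⟨Or.inr ⟨h3.symm, h4⟩, h1⟩
    · exact Or.inl ⟨Or.inl h3, h1⟩
  · rintro (⟨h1, h2⟩ | ⟨h1, h2⟩)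
    · refine ⟨h2, ?_⟩
      rcases h1 with h1 | ⟨h1, -⟩ <;> linarith
    · refine ⟨?_, h2⟩
      rcases h1 with h1 | ⟨h1, -⟩ <;> linarith

/-- The one-dimensional labelling. The Boolean tag of a label records which of the two intervals
contributes its rank and which its canonical blocks. -/
lemma exists_labels {n : ℕ} (lo hi : Fin n → ℝ) (h : ∀ v, lo v ≤ hi v) :
    ∃ X Y : Fin n → Finset (Bool × ℕ × ℕ),
      (∀ v, Disjoint (X v) (Y v)) ∧
      (∀ u v, u ≠ v → ((∃ i, i ∈ X u ∧ i ∈ Y v) ↔ lo u ≤ hi v ∧ lo v ≤ hi u)) ∧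
      (∀ v, (X v).card ≤ 3 * (Nat.log 2 n + 1)) ∧
      (∀ v, (Y v).card ≤ 3 * (Nat.log 2 n + 1)) := by
  let P : Fin n → Finset (ℕ × ℕ) := fun v => pointBlocks n (leftRank lo v)
  let Q : Fin n → Finset (ℕ × ℕ) := fun v =>
    canonicalBlocks n (leftRank lo v + 1) (leftCount lo (hi v))
  have hPQ : ∀ u v, (∃ x, x ∈ P u ∧ x ∈ Q v) ↔
      leftRank lo v + 1 ≤ leftRank lo u ∧ leftRank lo u < leftCount lo (hi v) :=
    fun u v => dyadic_cover (leftCount_le _ _)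
  let W : Finset (ℕ × ℕ) → Finset (ℕ × ℕ) → Finset (Bool × ℕ × ℕ) := fun S T =>
    ({true} ×ˢ S) ∪ ({false} ×ˢ T)
  have hmem_true : ∀ S T x, (true, x) ∈ W S T ↔ x ∈ S := by
    intro S T x
    simp [W]
  have hmem_false : ∀ S T x, (false, x) ∈ W S T ↔ x ∈ T := by
    intro S T x
    simp [W]
  have hcard : ∀ S T, (W S T).card ≤ S.card + T.card := by
    intro S T
    refine (Finset.card_union_le _ _).trans ?_
    simp
  have hself : ∀ v x, x ∈ P v → x ∉ Q v := by
    intro v x hx hx'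
    have := ((hPQ v v).1 ⟨x, hx, hx'⟩).1
    omega
  have hP : ∀ v, (P v).card ≤ Nat.log 2 n + 1 := fun v => card_pointBlocks_le _ _
  have hQ : ∀ v, (Q v).card ≤ 2 * (Nat.log 2 n + 1) := fun v => card_canonicalBlocks_le _ _ _
  refine ⟨fun v => W (P v) (Q v), fun v => W (Q v) (P v), ?_, ?_, ?_, ?_⟩
  · intro v
    rw [Finset.disjoint_left]
    rintro ⟨c, x⟩ h1 h2
    cases c
    · exact hself v x ((hmem_false _ _ _).1 h2) ((hmem_false _ _ _).1 h1)
    · exact hself v x ((hmem_true _ _ _).1 h1) ((hmem_true _ _ _).1 h2)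
  · intro u v huv
    rw [interval_meet_iff h huv, ← hPQ, ← hPQ]
    constructor
    · rintro ⟨⟨c, x⟩, h1, h2⟩
      cases c
      · exact Or.inr ⟨x, (hmem_false _ _ _).1 h2, (hmem_false _ _ _).1 h1⟩
      · exact Or.inl ⟨x, (hmem_true _ _ _).1 h1, (hmem_true _ _ _).1 h2⟩
    · rintro (⟨x, h1, h2⟩ | ⟨x, h1, h2⟩)
      · exact ⟨(true, x), (hmem_true _ _ _).2 h1, (hmem_true _ _ _).2 h2⟩
      · exact ⟨(false, x), (hmem_false _ _ _).2 h2, (hmem_false _ _ _).2 h1⟩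
  · intro v
    have := hcard (P v) (Q v)
    have := hP v
    have := hQ v
    beta_reduce
    omega
  · intro v
    have := hcard (Q v) (P v)
    have := hP v
    have := hQ v
    beta_reduce
    omega

/-! ### Boxes -/

lemma boxes_meet_iff {d : ℕ} {a b a' b' : Fin d → ℝ} (h : a ≤ b) (h' : a' ≤ b') :
    (Set.Icc a b ∩ Set.Icc a' b').Nonempty ↔ ∀ j, a j ≤ b' j ∧ a' j ≤ b j := by
  rw [Set.Icc_inter_Icc, Set.nonempty_Icc, sup_le_iff, le_inf_iff, le_inf_iff]
  constructor
  · rintro ⟨⟨-, h1⟩, h2, -⟩ j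
    exact ⟨h1 j, h2 j⟩
  · intro hj
    exact ⟨⟨h, fun j => (hj j).1⟩, fun j => (hj j).2, h'⟩

/-- Intersection graphs of axis-aligned boxes in `ℝ^d` admit biclique covers of
size `O(n (log₂ n)^d)` in which every vertex appears in `O((log₂ n)^d)`
bicliques. -/
theorem stmt_14 (d : ℕ) (hd : 1 ≤ d) :
    ∃ C : ℝ, 0 < C ∧ ∀ n : ℕ, 2 ≤ n →
      ∀ (lo hi : Fin n → Fin d → ℝ), (∀ v, lo v ≤ hi v) →
      ∀ G : SimpleGraph (Fin n),
      (∀ u v, G.Adj u v ↔ u ≠ v ∧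
        (Set.Icc (lo u) (hi u) ∩ Set.Icc (lo v) (hi v)).Nonempty) →
      ∃ (m : ℕ) (A B : Fin m → Finset (Fin n)),
        IsBicliqueCover G A B ∧
        (coverSize A B : ℝ) ≤ C * (n : ℝ) * (Real.logb 2 n) ^ d ∧
        ∀ v : Fin n,
          (((Finset.univ : Finset (Fin m)).filter
              (fun i => v ∈ A i ∨ v ∈ B i)).card : ℝ) ≤ C * (Real.logb 2 n) ^ d := by
  classical
  refine ⟨2 * 6 ^ d, by positivity, ?_⟩
  intro n hn lo hi hlohi G hG
  choose X Y hdisj hmeet hX hY using fun j : Fin d =>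
    exists_labels (fun v => lo v j) (fun v => hi v j) (fun v => hlohi v j)
  obtain ⟨m, A, B, hcov, hsize, hdeg⟩ := exists_cover_of_labels G
    (fun v => Fintype.piFinset (fun j => X j v)) (fun v => Fintype.piFinset (fun j => Y j v))
    ((3 * (Nat.log 2 n + 1)) ^ d)
    (by
      -- disjointness in a single coordinate suffices, and `1 ≤ d` provides one
      intro v
      rw [Finset.disjoint_left]
      intro i h1 h2
      rw [Fintype.mem_piFinset] at h1 h2
      exact Finset.disjoint_left.1 (hdisj ⟨0, hd⟩ v) (h1 _) (h2 _))
    (by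
      intro u v huv
      rw [hG, boxes_meet_iff (hlohi u) (hlohi v)]
      simp only [← hmeet _ u v huv, Fintype.mem_piFinset]
      constructor
      · rintro ⟨-, h⟩
        choose i hi using h
        exact ⟨i, fun j => (hi j).1, fun j => (hi j).2⟩
      · rintro ⟨i, h1, h2⟩
        exact ⟨huv, fun j => ⟨i j, h1 j, h2 j⟩⟩)
    (by
      intro v
      rw [Fintype.card_piFinset]
      exact (Finset.prod_le_pow_card _ _ _ fun j _ => hX j v).trans (by simp))
    (by
      intro v
      rw [Fintype.card_piFinset]
      exact (Finset.prod_le_pow_card _ _ _ fun j _ => hY j v).trans (by simp))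
  have hn' : (2 : ℝ) ≤ n := by exact_mod_cast hn
  have hlog1 : 1 ≤ Real.logb 2 n := by
    rw [Real.le_logb_iff_rpow_le (by norm_num) (by linarith)]
    simpa using hn'
  have hlog : (Nat.log 2 n : ℝ) ≤ Real.logb 2 n := by
    rw [Real.le_logb_iff_rpow_le (by norm_num) (by linarith), Real.rpow_natCast]
    exact_mod_cast Nat.pow_log_le_self 2 (by omega)
  have hK : (((2 * (3 * (Nat.log 2 n + 1)) ^ d : ℕ)) : ℝ) ≤ 2 * 6 ^ d * Real.logb 2 n ^ d := by
    push_cast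
    rw [mul_assoc, ← mul_pow]
    refine mul_le_mul_of_nonneg_left (pow_le_pow_left₀ (by positivity) ?_ d) (by norm_num)
    linarith
  refine ⟨m, A, B, hcov, ?_, fun v => le_trans (by exact_mod_cast hdeg v) hK⟩
  calc (coverSize A B : ℝ) ≤ ((n * (2 * (3 * (Nat.log 2 n + 1)) ^ d) : ℕ) : ℝ) := by
        exact_mod_cast hsize
    _ = n * ((2 * (3 * (Nat.log 2 n + 1)) ^ d : ℕ) : ℝ) := by rw [Nat.cast_mul]
    _ ≤ n * (2 * 6 ^ d * Real.logb 2 n ^ d) := by gcongr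
    _ = 2 * 6 ^ d * n * Real.logb 2 n ^ d := by ring
end

section
/- For all integers d ≥ 1 and t ≥ 1 there exists a constant C_d > 0 such that for all n ≥ 2, if G is the intersection graph of n nonempty axis-aligned boxes in ℝ^d and G contains no K_{t,t} subgraph, then G has at most C_d · t · n · (log₂ n)^d edges. -/
/-- The dyadic blocks `(j, a)`, standing for `[a 2^j, (a+1) 2^j)`, that represent `[p, q)`: for each
level `j ≤ k`, the leftmost and the rightmost block contained in `[p, q)`. -/
def dyadicCover (k p q : ℕ) : Finset (ℕ × ℕ) :=
  (((Finset.range (k + 1)).image fun j => (j, (p + 2 ^ j - 1) / 2 ^ j)) ∪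
    ((Finset.range (k + 1)).image fun j => (j, q / 2 ^ j - 1))).filter
      fun b => p ≤ b.2 * 2 ^ b.1 ∧ (b.2 + 1) * 2 ^ b.1 ≤ q

/-- The dyadic blocks of level at most `k` that contain `x`. -/
def dyadicBlocks (k x : ℕ) : Finset (ℕ × ℕ) :=
  (Finset.range (k + 1)).image fun j => (j, x / 2 ^ j)

lemma card_dyadicCover (k p q : ℕ) : (dyadicCover k p q).card ≤ 2 * (k + 1) := by
  refine (Finset.card_filter_le _ _).trans ((Finset.card_union_le _ _).trans ?_)
  have h1 : ((Finset.range (k + 1)).image fun j => (j, (p + 2 ^ j - 1) / 2 ^ j)).card ≤ k + 1 :=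
    Finset.card_image_le.trans (by simp)
  have h2 : ((Finset.range (k + 1)).image fun j => (j, q / 2 ^ j - 1)).card ≤ k + 1 :=
    Finset.card_image_le.trans (by simp)
  omega

lemma card_dyadicBlocks (k x : ℕ) : (dyadicBlocks k x).card ≤ k + 1 :=
  Finset.card_image_le.trans (by simp)

lemma dyadic_mem_iff {k p q x : ℕ} (hq : q < 2 ^ (k + 1)) :
    (p ≤ x ∧ x < q) ↔ ∃ b ∈ dyadicCover k p q, b ∈ dyadicBlocks k x := by
  constructor
  · rintro ⟨hp, hx⟩
    let P : ℕ → Prop := fun j => p ≤ x / 2 ^ j * 2 ^ j ∧ (x / 2 ^ j + 1) * 2 ^ j ≤ q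
    have hP0 : P 0 := by simp [P]; omega
    have hPk : ¬ P (k + 1) := by
      rintro ⟨-, h⟩
      have : 2 ^ (k + 1) ≤ (x / 2 ^ (k + 1) + 1) * 2 ^ (k + 1) :=
        Nat.le_mul_of_pos_left _ (Nat.succ_pos _)
      omega
    -- The block of `x` at the last level `j` before containment in `[p, q)` first fails.
    obtain ⟨j, hjk, hj, hj'⟩ : ∃ j ≤ k, P j ∧ ¬ P (j + 1) := by
      by_contra! hcon
      have : ∀ j ≤ k + 1, P j := by
        intro j
        induction j with
        | zero => intro _; exact hP0
        | succ j ih => intro h; exact hcon j (by omega) (ih (by omega))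
      exact hPk (this _ le_rfl)
    refine ⟨(j, x / 2 ^ j), ?_, ?_⟩
    swap
    · exact Finset.mem_image.2 ⟨j, Finset.mem_range.2 (by omega), rfl⟩
    refine Finset.mem_filter.2 ⟨?_, hj⟩
    have hM : 0 < 2 ^ j := by positivity
    have hdiv : x / 2 ^ (j + 1) = x / 2 ^ j / 2 := by
      rw [pow_succ, Nat.div_div_eq_div_mul]
    simp only [P, hdiv] at hj hj'
    rw [pow_succ] at hj'
    generalize hMj : 2 ^ j = M at *
    generalize x / M = a at *
    obtain ⟨h1, h2⟩ := hj
    -- The parent block sticks out of `[p, q)` on the left or on the right.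
    by_cases hl : p ≤ a / 2 * (M * 2)
    · have hr : q < (a / 2 + 1) * (M * 2) := by
        by_contra hr
        exact hj' ⟨hl, by omega⟩
      have : (a / 2 + 1) * (M * 2) ≤ (a + 2) * M := by
        have : (a / 2 + 1) * 2 ≤ a + 2 := by omega
        nlinarith
      have hqa : q / M = a + 1 := by
        have e1 : (a + 2) * M = (a + 1) * M + M := by ring
        rw [Nat.div_eq_iff hM]
        omega
      refine Finset.mem_union_right _ (Finset.mem_image.2 ⟨j, Finset.mem_range.2 (by omega), ?_⟩)
      simp [hMj, hqa]
    · have : a * M ≤ a / 2 * (M * 2) + M := by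
        have : a ≤ a / 2 * 2 + 1 := by omega
        nlinarith
      have hpa : (p + M - 1) / M = a := by
        rw [Nat.div_eq_iff hM]
        omega
      refine Finset.mem_union_left _ (Finset.mem_image.2 ⟨j, Finset.mem_range.2 (by omega), ?_⟩)
      simp [hMj, hpa]
  · rintro ⟨b, hb, hb'⟩
    obtain ⟨-, h1, h2⟩ := Finset.mem_filter.1 hb
    obtain ⟨j, -, rfl⟩ := Finset.mem_image.1 hb'
    have h3 := Nat.div_mul_le_self x (2 ^ j)
    have h4 := Nat.lt_mul_div_succ x (show 0 < 2 ^ j by positivity)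
    rw [mul_comm] at h4
    simp only at h1 h2
    omega

/-- In dimension one, meeting of intervals is witnessed by a common label, with logarithmically
many labels per interval.  The Boolean records which of the two intervals contains the left endpoint
of the other. -/
lemma interval_labels {n k : ℕ} (hn : n < 2 ^ (k + 1)) (lo hi : Fin n → ℝ) (h : ∀ u, lo u ≤ hi u) :
    ∃ A B : Fin n → Finset ((ℕ × ℕ) × Bool),
      (∀ u, (A u).card ≤ 3 * (k + 1)) ∧ (∀ u, (B u).card ≤ 3 * (k + 1)) ∧
      ∀ u v, (lo u ≤ hi v ∧ lo v ≤ hi u) ↔ ∃ i ∈ A u, i ∈ B v := by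
  classical
  let p : Fin n → ℕ := fun u => (Finset.univ.filter fun w => lo w < lo u).card
  let q : Fin n → ℕ := fun u => (Finset.univ.filter fun w => lo w ≤ hi u).card
  have hq : ∀ u, q u < 2 ^ (k + 1) := fun u =>
    lt_of_le_of_lt ((Finset.card_le_univ _).trans (by simp)) hn
  have hpp : ∀ u v, p u ≤ p v ↔ lo u ≤ lo v := by
    intro u v
    constructor
    · intro h1
      by_contra! h2
      refine absurd h1 (not_le.2 (Finset.card_lt_card ?_))
      refine Finset.ssubset_iff_of_subset ?_ |>.2 ⟨v, by simpa using h2, by simp⟩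
      intro w
      simp only [Finset.mem_filter, Finset.mem_univ, true_and]
      intro hw; linarith
    · intro h1
      refine Finset.card_le_card ?_
      intro w
      simp only [Finset.mem_filter, Finset.mem_univ, true_and]
      intro hw; linarith
  have hpq : ∀ u v, p v < q u ↔ lo v ≤ hi u := by
    intro u v
    constructor
    · intro h1
      by_contra! h2
      refine absurd h1 (not_lt.2 (Finset.card_le_card ?_))
      intro w
      simp only [Finset.mem_filter, Finset.mem_univ, true_and]
      intro hw; linarith
    · intro h1
      refine Finset.card_lt_card ?_
      refine Finset.ssubset_iff_of_subset ?_ |>.2 ⟨v, by simpa using h1, by simp⟩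
      intro w
      simp only [Finset.mem_filter, Finset.mem_univ, true_and]
      intro hw; linarith
  have key : ∀ u v, (lo u ≤ lo v ∧ lo v ≤ hi u) ↔
      ∃ b ∈ dyadicCover k (p u) (q u), b ∈ dyadicBlocks k (p v) := by
    intro u v
    rw [← dyadic_mem_iff (hq u), hpp, hpq]
  refine ⟨fun u => (dyadicCover k (p u) (q u)).image (fun b => (b, true)) ∪
      (dyadicBlocks k (p u)).image (fun b => (b, false)),
    fun u => (dyadicCover k (p u) (q u)).image (fun b => (b, false)) ∪
      (dyadicBlocks k (p u)).image (fun b => (b, true)), ?_, ?_, ?_⟩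
  · intro u
    have h1 := card_dyadicCover k (p u) (q u)
    have h2 := card_dyadicBlocks k (p u)
    refine (Finset.card_union_le _ _).trans ?_
    refine (add_le_add (Finset.card_image_le.trans h1) (Finset.card_image_le.trans h2)).trans ?_
    omega
  · intro u
    have h1 := card_dyadicCover k (p u) (q u)
    have h2 := card_dyadicBlocks k (p u)
    refine (Finset.card_union_le _ _).trans ?_
    refine (add_le_add (Finset.card_image_le.trans h1) (Finset.card_image_le.trans h2)).trans ?_
    omega
  · intro u v
    have hu := h u
    have hv := h v
    have h1 : (lo u ≤ hi v ∧ lo v ≤ hi u) ↔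
        ((lo u ≤ lo v ∧ lo v ≤ hi u) ∨ (lo v ≤ lo u ∧ lo u ≤ hi v)) := by
      constructor
      · rintro ⟨a, b⟩
        rcases le_total (lo u) (lo v) with c | c
        · exact Or.inl ⟨c, b⟩
        · exact Or.inr ⟨c, a⟩
      · rintro (⟨a, b⟩ | ⟨a, b⟩) <;> constructor <;> linarith
    rw [h1, key, key]
    constructor
    · rintro (⟨b, hb, hb'⟩ | ⟨b, hb, hb'⟩)
      · exact ⟨(b, true), by simp [hb], by simp [hb']⟩
      · exact ⟨(b, false), by simp [hb'], by simp [hb]⟩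
    · rintro ⟨⟨b, c⟩, hb, hb'⟩
      cases c
      · right; exact ⟨b, by simpa using hb', by simpa using hb⟩
      · left; exact ⟨b, by simpa using hb, by simpa using hb'⟩

/-- If adjacency of distinct `u` and `v` in a `K_{t,t}`-free graph is witnessed by a common
label of `A u` and `B v`, with at most `N` labels in each set, the graph has at most `4 t n N` edges. -/
lemma edges_le_of_labels {n t N : ℕ} {ι : Type*} [DecidableEq ι] (G : SimpleGraph (Fin n))
    (A B : Fin n → Finset ι) (hA : ∀ u, (A u).card ≤ N) (hB : ∀ u, (B u).card ≤ N)
    (hG : ∀ u v, G.Adj u v ↔ u ≠ v ∧ ∃ i ∈ A u, i ∈ B v)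
    (hK : ¬ ∃ S T : Finset (Fin n), Disjoint S T ∧ S.card = t ∧ T.card = t ∧
        ∀ x ∈ S, ∀ y ∈ T, G.Adj x y) :
    G.edgeSet.ncard ≤ 4 * t * n * N := by
  classical
  let I : Finset ι := Finset.univ.biUnion A
  let X : ι → Finset (Fin n) := fun i => Finset.univ.filter fun u => i ∈ A u
  let Y : ι → Finset (Fin n) := fun i => Finset.univ.filter fun u => i ∈ B u
  have hXY : ∀ i, (X i).card * (Y i).card ≤ 2 * t * ((X i).card + (Y i).card) := by
    intro i
    have hmin : (X i).card < 2 * t ∨ (Y i).card < 2 * t := by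
      by_contra! hc
      obtain ⟨S, hS, hSc⟩ := Finset.exists_subset_card_eq (show t ≤ (X i).card by omega)
      -- `X i` and `Y i` may overlap, which is why `2 t` elements are needed.
      have hYS : t ≤ (Y i \ S).card := by
        have := Finset.le_card_sdiff S (Y i)
        omega
      obtain ⟨T, hT, hTc⟩ := Finset.exists_subset_card_eq hYS
      have hd : Disjoint S T :=
        Finset.disjoint_of_subset_right hT Finset.disjoint_sdiff
      refine hK ⟨S, T, hd, hSc, hTc, ?_⟩
      intro x hx y hy
      have hxX := hS hx
      have hyY := (Finset.mem_sdiff.1 (hT hy)).1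
      simp only [X, Y, Finset.mem_filter, Finset.mem_univ, true_and] at hxX hyY
      exact (hG x y).2 ⟨Finset.disjoint_left.1 hd |> fun h e => h hx (e ▸ hy), i, hxX, hyY⟩
    rcases hmin with h | h <;> nlinarith [Nat.zero_le ((X i).card), Nat.zero_le ((Y i).card)]
  have hsub : G.edgeSet ⊆ ((I.biUnion fun i => X i ×ˢ Y i).image
      (fun e : Fin n × Fin n => s(e.1, e.2)) : Finset (Sym2 (Fin n))) := by
    intro e
    induction e using Sym2.ind with
    | _ u v =>
      intro he
      obtain ⟨-, i, hi, hi'⟩ := (hG u v).1 he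
      refine Finset.mem_coe.2 (Finset.mem_image.2 ⟨(u, v), ?_, rfl⟩)
      refine Finset.mem_biUnion.2 ⟨i, Finset.mem_biUnion.2 ⟨u, Finset.mem_univ _, hi⟩, ?_⟩
      simp [X, Y, hi, hi']
  have hX : ∑ i ∈ I, (X i).card ≤ n * N := by
    have := Finset.sum_card_bipartiteAbove_eq_sum_card_bipartiteBelow
      (s := I) (t := (Finset.univ : Finset (Fin n))) (fun i u => i ∈ A u)
    refine (this.trans_le (Finset.sum_le_card_nsmul _ _ N ?_)).trans (by simp)
    intro u _
    refine (Finset.card_le_card ?_).trans (hA u)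
    intro i hi
    exact (Finset.mem_filter.1 hi).2
  have hY : ∑ i ∈ I, (Y i).card ≤ n * N := by
    have := Finset.sum_card_bipartiteAbove_eq_sum_card_bipartiteBelow
      (s := I) (t := (Finset.univ : Finset (Fin n))) (fun i u => i ∈ B u)
    refine (this.trans_le (Finset.sum_le_card_nsmul _ _ N ?_)).trans (by simp)
    intro u _
    refine (Finset.card_le_card ?_).trans (hB u)
    intro i hi
    exact (Finset.mem_filter.1 hi).2
  calc G.edgeSet.ncard
      ≤ _ := Set.ncard_le_ncard hsub (Finset.finite_toSet _)
    _ = _ := Set.ncard_coe_finset _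
    _ ≤ _ := Finset.card_image_le
    _ ≤ ∑ i ∈ I, (X i ×ˢ Y i).card := Finset.card_biUnion_le
    _ ≤ ∑ i ∈ I, 2 * t * ((X i).card + (Y i).card) :=
        Finset.sum_le_sum fun i _ => by rw [Finset.card_product]; exact hXY i
    _ = 2 * t * (∑ i ∈ I, (X i).card + ∑ i ∈ I, (Y i).card) := by
        rw [← Finset.mul_sum, Finset.sum_add_distrib]
    _ ≤ 2 * t * (n * N + n * N) := by gcongr
    _ = 4 * t * n * N := by ring

/-- A `K_{t,t}`-free intersection graph of `n` axis-aligned boxes in `ℝ^d` has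
at most `O(t · n (log₂ n)^d)` edges. -/
theorem stmt_15 (d t : ℕ) (hd : 1 ≤ d) (ht : 1 ≤ t) :
    ∃ C : ℝ, 0 < C ∧ ∀ n : ℕ, 2 ≤ n →
      ∀ (lo hi : Fin n → Fin d → ℝ), (∀ v, lo v ≤ hi v) →
      ∀ G : SimpleGraph (Fin n),
      (∀ u v, G.Adj u v ↔ u ≠ v ∧
        (Set.Icc (lo u) (hi u) ∩ Set.Icc (lo v) (hi v)).Nonempty) →
      (¬ ∃ S T : Finset (Fin n), Disjoint S T ∧ S.card = t ∧ T.card = t ∧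
        ∀ x ∈ S, ∀ y ∈ T, G.Adj x y) →
      (G.edgeSet.ncard : ℝ) ≤ C * (t : ℝ) * (n : ℝ) * (Real.logb 2 n) ^ d := by
  refine ⟨4 * 6 ^ d, by positivity, ?_⟩
  intro n hn lo hi hlh G hG hK
  have hnk : n < 2 ^ (Nat.log 2 n + 1) := Nat.lt_pow_succ_log_self (by norm_num) n
  choose A B hA hB hAB using fun j : Fin d =>
    interval_labels hnk (fun u => lo u j) (fun u => hi u j) (fun u => hlh u j)
  have hcount := edges_le_of_labels (N := (3 * (Nat.log 2 n + 1)) ^ d) G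
    (fun u => Fintype.piFinset fun j => A j u) (fun u => Fintype.piFinset fun j => B j u)
    (fun u => by
      rw [Fintype.card_piFinset]
      exact (Finset.prod_le_pow_card _ _ _ fun j _ => hA j u).trans (by simp))
    (fun u => by
      rw [Fintype.card_piFinset]
      exact (Finset.prod_le_pow_card _ _ _ fun j _ => hB j u).trans (by simp))
    (fun u v => by
      rw [hG, Set.Icc_inter_Icc, Set.nonempty_Icc, sup_le_iff, le_inf_iff, le_inf_iff]
      refine and_congr_right fun _ => ?_
      constructor
      · rintro ⟨⟨-, h1⟩, h2, -⟩
        choose f hf hf' using fun j => (hAB j u v).1 ⟨h1 j, h2 j⟩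
        exact ⟨f, Fintype.mem_piFinset.2 hf, Fintype.mem_piFinset.2 hf'⟩
      · rintro ⟨f, hf, hf'⟩
        have h := fun j => (hAB j u v).2
          ⟨f j, Fintype.mem_piFinset.1 hf j, Fintype.mem_piFinset.1 hf' j⟩
        exact ⟨⟨hlh u, fun j => (h j).1⟩, fun j => (h j).2, hlh v⟩) hK
  have h1 : (1 : ℝ) ≤ Real.logb 2 n := by
    rw [Real.le_logb_iff_rpow_le (by norm_num) (by positivity)]
    simpa using hn
  have h2 : (Nat.log 2 n : ℝ) ≤ Real.logb 2 n := Real.natLog_le_logb n 2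
  calc (G.edgeSet.ncard : ℝ)
      ≤ ((4 * t * n * (3 * (Nat.log 2 n + 1)) ^ d : ℕ) : ℝ) := by exact_mod_cast hcount
    _ = 4 * t * n * (3 * ((Nat.log 2 n : ℝ) + 1)) ^ d := by push_cast; ring
    _ ≤ 4 * t * n * (6 * Real.logb 2 n) ^ d := by
        have h3 : 3 * ((Nat.log 2 n : ℝ) + 1) ≤ 6 * Real.logb 2 n := by linarith
        gcongr 4 * t * n * ?_ ^ d
    _ = 4 * 6 ^ d * t * n * Real.logb 2 n ^ d := by rw [mul_pow]; ring
end
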